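/- arXiv:2407.01341 — 2 statements merged into one kernel-verified Lean document; each statement's English description precedes it below -/
import Mathlib

section
/- There exists an absolute constant K > 0 such that the following holds. Let q = ψ' + ψ² with ψ ∈ 𝒜(I_π) of the form ψ = f + g/2, where f ∈ 𝒜(I_π) with dom(f) = I_d (d ≤ π), and g = −(log h)' on I_d for some (1/m)-concave function h which is affine on an interval [a,b] with I_{π/4} ⊆ [a,b] ⊆ I_d. If λ₁(I_d, q) ≤ 7, then λ₁(I_d, q) ≥ 3 + (8K/(mπ²)) · [1 − min{h(a),h(b)}/max{h(a),h(b)}]². -/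
open MeasureTheory Real Set Filter
open scoped ENNReal

noncomputable section

/-- Test class for the Dirichlet eigenvalue with measure potential on `(a,b)`:
`C¹` functions vanishing outside the open interval (a core of `H¹₀`). -/
def TestFun (a b : ℝ) (v : ℝ → ℝ) : Prop :=
  ContDiff ℝ 1 v ∧ ∀ x ∉ Ioo a b, v x = 0

/-- Rayleigh quotient for the Dirichlet eigenvalue with (nonnegative, possibly infinite)
measure potential `q` on the interval `(a,b)`. -/
def dirRQ (a b : ℝ) (q : Measure ℝ) (v : ℝ → ℝ) : ℝ≥0∞ :=
  ((∫⁻ x in Ioo a b, ENNReal.ofReal ((deriv v x) ^ 2)) +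
      ∫⁻ x in Ioo a b, ENNReal.ofReal ((v x) ^ 2) ∂q) /
    ∫⁻ x in Ioo a b, ENNReal.ofReal ((v x) ^ 2)

/-- `λ₁((a,b), q)`, the first Dirichlet eigenvalue with measure potential `q`. -/
def lam1 (a b : ℝ) (q : Measure ℝ) : ℝ≥0∞ :=
  ⨅ (v : ℝ → ℝ)
    (_ : TestFun a b v ∧ (∫⁻ x in Ioo a b, ENNReal.ofReal ((v x) ^ 2)) ≠ 0),
    dirRQ a b q v

/-- The class `𝒜(I_π)`: an increasing function `psi` with finiteness domain `dom ⊆ I_π`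
(an interval), satisfying the improved-monotonicity gap condition, together with the
measure `nu` representing its distributional derivative `ψ'` on `dom`. -/
structure PsiA where
  dom : Set ℝ
  domSub : dom ⊆ Ioo (-(π / 2)) (π / 2)
  domConn : dom.OrdConnected
  psi : ℝ → ℝ
  mono : MonotoneOn psi dom
  gap : ∀ ⦃x⦄, x ∈ dom → ∀ ⦃y⦄, y ∈ dom → x < y →
    2 * tan ((y - x) / 2) ≤ psi y - psi x
  nu : Measure ℝ
  nu_eq : ∀ ⦃x⦄, x ∈ dom → ∀ ⦃y⦄, y ∈ dom → x ≤ y →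
    nu (Ioc x y) = ENNReal.ofReal (psi y - psi x)

/-- The measure `ψ'`, extended by `+∞` on `I_π \ dom ψ`. -/
def PsiA.derivM (P : PsiA) : Measure ℝ :=
  P.nu.restrict P.dom + (∞ : ℝ≥0∞) • volume.restrict (Ioo (-(π / 2)) (π / 2) \ P.dom)

/-- The measure `ψ² dx`, extended by `+∞` on `I_π \ dom ψ`. -/
def PsiA.sqM (P : PsiA) : Measure ℝ :=
  (volume.restrict P.dom).withDensity (fun x => ENNReal.ofReal ((P.psi x) ^ 2)) +
    (∞ : ℝ≥0∞) • volume.restrict (Ioo (-(π / 2)) (π / 2) \ P.dom)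

/-- The measure `q = ψ' + ψ²`, extended by `+∞` on `I_π \ dom ψ`. -/
def PsiA.qM (P : PsiA) : Measure ℝ :=
  P.nu.restrict P.dom +
    (volume.restrict P.dom).withDensity (fun x => ENNReal.ofReal ((P.psi x) ^ 2)) +
    (∞ : ℝ≥0∞) • volume.restrict (Ioo (-(π / 2)) (π / 2) \ P.dom)

/-- The function `cos² x` on `I_π`, extended by zero. -/
def cosSq : ℝ → ℝ := fun x => if x ∈ Ioo (-(π / 2)) (π / 2) then cos x ^ 2 else 0

/-- The measure with density `1 + 2 tan² x` on `I_π`. -/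
def tanWeight : Measure ℝ :=
  (volume.restrict (Ioo (-(π / 2)) (π / 2))).withDensity
    fun x => ENNReal.ofReal (1 + 2 * tan x ^ 2)

lemma second_deriv_test {φ φ' : ℝ → ℝ} {t0 c : ℝ}
    (h1 : ∀ᶠ t in nhds t0, HasDerivAt φ (φ' t) t) (h2 : HasDerivAt φ' c t0)
    (hmax : IsLocalMax φ t0) : c ≤ 0 := by
  by_contra hc
  push Not at hc
  have e : deriv φ =ᶠ[nhds t0] φ' := h1.mono fun t ht => ht.deriv
  have hd0 : deriv φ t0 = 0 := hmax.deriv_eq_zero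
  have hdd : deriv (deriv φ) t0 = c := by rw [e.deriv_eq, h2.deriv]
  have hmin : IsLocalMin φ t0 := by
    apply isLocalMin_of_deriv_deriv_pos (by rw [hdd]; exact hc) hd0
    exact h1.self_of_nhds.continuousAt
  have econst : φ =ᶠ[nhds t0] fun _ => φ t0 := by
    filter_upwards [hmax, hmin] with t h1 h2 using le_antisymm h1 h2
  have e2 : deriv φ =ᶠ[nhds t0] fun _ => 0 := by
    have := econst.deriv
    simpa using this
  have : deriv (deriv φ) t0 = 0 := by rw [e2.deriv_eq]; simp
  linarith

lemma poly_main {ε κ s c A : ℝ} (hε0 : 0 ≤ ε) (hs0 : 0 ≤ s) (hs1 : s ≤ 1) (hc : 0 < c)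
    (hsc : s^2 + c^2 = 1) (hA9 : 0.9 ≤ A)
    (hκ : κ = 20 * ε ∨ (κ = 0 ∧ s ≤ 0.57)) :
    ε * (s * (-6 + 24 * s^2 - 19.2 * s^4 + 0.01)) - κ * c * A ≤ 0 := by
  have hs4 : s^4 = s^2 * s^2 := by ring
  rw [hs4]
  have hx0 : 0 ≤ s^2 := sq_nonneg s
  have hx3 : s ≤ 0.57 → s^2 ≤ 0.3249 := fun h => by
    calc s^2 ≤ 0.57^2 := by gcongr
      _ = 0.3249 := by norm_num
  generalize s^2 = x at *
  rcases hκ with hκ | ⟨hκ, hs⟩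
  · rw [hκ]
    have hcA : 0 ≤ c * A := mul_nonneg hc.le (by linarith)
    by_cases hx : x ≤ 0.95
    · have hc2 : 0.2 ≤ c := by
        by_contra h
        push Not at h
        have : c^2 < 0.2^2 := by gcongr
        linarith
      have h18 : 0.18 ≤ c * A := by
        calc (0.18:ℝ) = 0.2 * 0.9 := by norm_num
          _ ≤ c * A := by gcongr
      have hP : -6 + 24 * x - 19.2 * (x * x) + 0.01 ≤ 1.6 := by nlinarith [sq_nonneg (x - 0.625)]
      have h2 : s * (-6 + 24 * x - 19.2 * (x * x) + 0.01) ≤ 1.6 := by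
        calc s * (-6 + 24 * x - 19.2 * (x * x) + 0.01) ≤ s * 1.6 := by gcongr
          _ ≤ 1.6 := by linarith
      have h3 := mul_le_mul_of_nonneg_left h2 hε0
      have h4 := mul_le_mul_of_nonneg_left h18 hε0
      linarith
    · push Not at hx
      have hP : -6 + 24 * x - 19.2 * (x * x) + 0.01 ≤ 0 := by nlinarith
      have h2 := mul_nonpos_of_nonneg_of_nonpos hs0 hP
      have h3 := mul_nonpos_of_nonneg_of_nonpos hε0 h2
      have h4 := mul_nonneg hε0 hcA
      linarith
  · rw [hκ]
    have hx := hx3 hs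
    have hP : -6 + 24 * x - 19.2 * (x * x) + 0.01 ≤ 0 := by nlinarith
    have h2 := mul_nonpos_of_nonneg_of_nonpos hs0 hP
    have h3 := mul_nonpos_of_nonneg_of_nonpos hε0 h2
    linarith

/-- the barrier inequality, trig-free -/
lemma barrier_ineq_main {ε σ τ s c : ℝ} (hε0 : 0 ≤ ε) (hε1 : ε ≤ 1/100) (hσ : 0 < σ) (hσ1 : σ ≤ 1)
    (hτ : τ = σ/100) (hs0 : 0 ≤ s) (hs1 : s ≤ 1) (hc : 0 < c) (hsc : s^2 + c^2 = 1) 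
    (κ : ℝ) (hκ : κ = 20 * ε ∨ (κ = 0 ∧ s ≤ 0.57)) :
    -3 * s * (1 + ε*(-3*s^2+3*s^4) - 4*τ*s) + (1-s^2)*(ε*(-6*s+12*s^3) - 4*τ)
      + (3 + ε/100 - σ) * (s + ε*(-s^3+(3/5)*s^5) + τ*(1-2*s^2)) 
      - κ * c * (1 + ε*(-3*s^2+3*s^4) - 4*τ*s) < 0 := by
  have hx0 : 0 ≤ s^2 := sq_nonneg s
  have hx1 : s^2 ≤ 1 := by nlinarith
  have hxs : s^2 ≤ s := by nlinarith
  have hx4 : s^4 ≤ s^2 := by nlinarith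
  have hτ0 : 0 < τ := by linarith
  set F := (s + ε*(-s^3+(3/5)*s^5) + τ*(1-2*s^2)) with hF
  set A := (1 + ε*(-3*s^2+3*s^4) - 4*τ*s) with hA
  have hA9 : 0.9 ≤ A := by
    have : ε*(-3*s^2+3*s^4) ≥ -(3/100) := by nlinarith
    have : τ * s ≤ 1/100 := by nlinarith
    rw [hA]; nlinarith
  have h53 : s^5 ≤ s^3 := by
    have : 0 ≤ s^3 * (1 - s^2) := mul_nonneg (by positivity) (by linarith)
    nlinarith
  have h3 : s^3 ≤ s := by nlinarith
  have h30 : 0 ≤ s^3 := by positivity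
  have h50 : 0 ≤ s^5 := by positivity
  have hFub : F ≤ s + τ := by
    have h1 : ε*(-s^3+(3/5)*s^5) ≤ 0 := mul_nonpos_of_nonneg_of_nonpos hε0 (by linarith)
    have h2 : τ * (1 - 2*s^2) ≤ τ := by nlinarith
    rw [hF]; linarith
  have hFlb : 0.9 * s ≤ F := by
    have h1 : ε*(-s^3+(3/5)*s^5) ≥ -(1/100) * s := by nlinarith
    have h2 : τ * (1 - 2*s^2) ≥ - (2/100) * s := by nlinarith
    rw [hF]; linarith
  have key : -3 * s * A + (1-s^2)*(ε*(-6*s+12*s^3) - 4*τ) + 3 * F 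
     = ε * (s * (-6 + 24 * s^2 - 19.2 * s^4)) + τ * (-1 + 10 * s^2) := by
    rw [hA, hF]; ring
  have e1 : σ * F ≥ σ * (0.9 * s) := by gcongr
  have e2 : ε / 100 * F ≤ ε / 100 * (s + τ) := by gcongr
  have e3 : τ * (10 * s^2) ≤ σ * (0.1 * s) := by rw [hτ]; nlinarith
  have e4 : ε * τ ≤ τ / 100 := by nlinarith
  have e5 : 0 ≤ σ * s := by positivity
  have main : ε * (s * (-6 + 24 * s^2 - 19.2 * s^4 + 0.01)) - κ * c * A ≤ 0 := 
    poly_main hε0 hs0 hs1 hc hsc hA9 hκ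
  nlinarith only [key, e1, e2, e3, e4, e5, main, hτ0]

lemma ode_vec_bound {a b ps l M N : ℝ} (hM : 2 * |ps| + |l| + 1 ≤ M) (ha : |a| ≤ N) (hb : |b| ≤ N) :
    ‖((b, 2 * ps * b - l * a) : ℝ × ℝ)‖ ≤ M * N := by
  have hN : 0 ≤ N := (abs_nonneg a).trans ha
  rw [Prod.norm_def]
  simp only [Real.norm_eq_abs]
  apply max_le
  · nlinarith [abs_nonneg ps, abs_nonneg l]
  · have h1 : |2 * ps * b| ≤ 2 * |ps| * N := by
      rw [abs_mul, abs_mul, abs_two]; gcongr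
    have h2 : |l * a| ≤ |l| * N := by rw [abs_mul]; gcongr
    have h3 := abs_sub (2 * ps * b) (l * a)
    nlinarith

lemma clip_props (r : ℝ) (hr : 0 ≤ r) : 
    (∀ u : ℝ, |max (-r) (min r u)| ≤ r) ∧ (∀ u : ℝ, |max (-r) (min r u)| ≤ |u|) ∧ 
    (∀ u : ℝ, |u| ≤ r → max (-r) (min r u) = u) ∧ 
    (∀ u v : ℝ, |max (-r) (min r u) - max (-r) (min r v)| ≤ |u - v|) := by
  refine ⟨fun u => ?_, fun u => ?_, fun u hu => ?_, fun u v => ?_⟩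
  · rw [abs_le]; exact ⟨le_max_left _ _, max_le (by linarith) (min_le_left _ _)⟩
  · rcases le_total 0 u with h | h
    · rw [max_eq_right (by have := le_min hr h; linarith), abs_of_nonneg (le_min hr h), abs_of_nonneg h]
      exact min_le_right _ _
    · rw [min_eq_right (by linarith), abs_of_nonpos (max_le (by linarith) h), abs_of_nonpos h]
      linarith [le_max_right (-r) u]
  · rw [abs_le] at hu
    rw [min_eq_right hu.2, max_eq_right hu.1]
  · refine (abs_max_sub_max_le_max _ _ _ _).trans ?_
    simp only [sub_self, abs_zero]
    refine max_le (abs_nonneg _) ((abs_min_sub_min_le_max _ _ _ _).trans ?_)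
    simp

lemma ode_exists (ps : ℝ → ℝ) (hps : Continuous ps) (l al be : ℝ) (hab : al < be) :
    ∃ w p : ℝ → ℝ, w al = -1 ∧ p al = 0 ∧ ∀ t ∈ Icc al be,
      HasDerivWithinAt w (p t) (Icc al be) t ∧
      HasDerivWithinAt p (2 * ps t * p t - l * w t) (Icc al be) t := by
  obtain ⟨B, hB⟩ := (isCompact_Icc (a := al) (b := be)).exists_bound_of_continuousOn hps.continuousOn
  simp only [Real.norm_eq_abs] at hB
  have hB0 : 0 ≤ B := (abs_nonneg _).trans (hB al ⟨le_rfl, hab.le⟩)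
  set M : ℝ := 2 * B + |l| + 1 with hMdef
  have hM0 : 0 < M := by positivity
  have hM : ∀ t ∈ Icc al be, 2 * |ps t| + |l| + 1 ≤ M := fun t ht => by
    have := hB t ht; linarith
  set r : ℝ := exp (M * (be - al)) with hr
  have hr0 : 0 < r := exp_pos _
  obtain ⟨c1, c2, c3, c4⟩ := clip_props r hr0.le
  set cl : ℝ → ℝ := fun u => max (-r) (min r u) with hcl
  set f : ℝ → ℝ × ℝ → ℝ × ℝ := fun t x => (cl x.2, 2 * ps t * cl x.2 - l * cl x.1) with hf
  have hT : 0 < be - al := sub_pos.2 hab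
  have hPL : IsPicardLindelof f (⟨al, le_rfl, hab.le⟩ : Icc al be) ((-1, 0) : ℝ × ℝ)
      ⟨M * r * (be - al), by positivity⟩ 0 ⟨M * r, by positivity⟩ ⟨M, hM0.le⟩ := by
    refine ⟨fun t ht => ?_, fun x _ => ?_, fun t ht x _ => ?_, ?_⟩
    · apply LipschitzOnWith.of_dist_le_mul
      intro x _ y _
      rw [dist_eq_norm, dist_eq_norm]
      have e : f t x - f t y = (cl x.2 - cl y.2, 2 * ps t * (cl x.2 - cl y.2) - l * (cl x.1 - cl y.1)) := by
        simp only [hf, Prod.mk_sub_mk]; congr 1; ring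
      rw [e]
      apply ode_vec_bound (hM t ht)
      · exact (c4 _ _).trans (norm_fst_le (x - y))
      · exact (c4 _ _).trans (norm_snd_le (x - y))
    · apply Continuous.continuousOn
      simp only [hf]; fun_prop
    · exact ode_vec_bound (hM t ht) (c1 _) (c1 _)
    · simp only [NNReal.coe_zero, sub_self, sub_zero]
      rw [max_eq_left hT.le]
      exact le_refl (M * r * (be - al))
  obtain ⟨y, hy0, hy⟩ := hPL.exists_eq_forall_mem_Icc_hasDerivWithinAt₀
  have hyc : ContinuousOn y (Icc al be) := fun t ht => (hy t ht).continuousWithinAt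
  have hbd : ∀ t ∈ Icc al be, ‖y t‖ ≤ r := by
    intro t ht
    have := norm_le_gronwallBound_of_norm_deriv_right_le (f := y) (f' := fun t => f t (y t)) (δ := 1) (K := M) (ε := 0)
      hyc (fun x hx => ?_) ?_ (fun x hx => ?_) t ht
    · rw [gronwallBound_ε0, one_mul] at this
      refine this.trans (exp_le_exp.2 ?_)
      have := ht.2
      gcongr
    · exact (hy x ⟨hx.1, hx.2.le⟩).mono_of_mem_nhdsWithin (Icc_mem_nhdsGE_of_mem hx)
    · have : y al = (-1, 0) := hy0
      rw [this]; simp [Prod.norm_def]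
    · rw [add_zero]
      apply ode_vec_bound (hM x ⟨hx.1, hx.2.le⟩)
      · exact (c2 _).trans (norm_fst_le (y x))
      · exact (c2 _).trans (norm_snd_le (y x))
  refine ⟨fun t => (y t).1, fun t => (y t).2, ?_, ?_, fun t ht => ?_⟩
  · have : y al = (-1, 0) := hy0
    simp [this]
  · have : y al = (-1, 0) := hy0
    simp [this]
  · have h := hy t ht
    have e : f t (y t) = ((y t).2, 2 * ps t * (y t).2 - l * (y t).1) := by
      have h1 : cl (y t).1 = (y t).1 := c3 _ ((norm_fst_le (y t)).trans (hbd t ht))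
      have h2 : cl (y t).2 = (y t).2 := c3 _ ((norm_snd_le (y t)).trans (hbd t ht))
      simp only [hf, h1, h2]
    rw [e] at h
    exact ⟨h.fst, h.snd⟩

def barF (ε τ t : ℝ) : ℝ := sin t + ε*(-(sin t)^3+(3/5)*(sin t)^5) + τ*(1-2*(sin t)^2)
def barA (ε τ t : ℝ) : ℝ := 1 + ε*(-3*(sin t)^2+3*(sin t)^4) - 4*τ*(sin t)
def barF1 (ε τ t : ℝ) : ℝ := cos t * barA ε τ t
def barF2 (ε τ t : ℝ) : ℝ := - sin t * barA ε τ t + (cos t)^2 * (ε * (-6*(sin t) + 12 *(sin t)^3) - 4*τ)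

lemma barF_deriv (ε τ t : ℝ) : HasDerivAt (barF ε τ) (barF1 ε τ t) t := by
  have hs := hasDerivAt_sin t
  have h := (hs.add (((hs.pow 3).neg.add ((hs.pow 5).const_mul (3/5:ℝ))).const_mul ε)).add
    ((((hs.pow 2).const_mul 2).const_sub 1).const_mul τ)
  refine HasDerivAt.congr_deriv (f := barF ε τ) h ?_
  simp only [barF1, barA]
  push_cast
  ring

lemma barF1_deriv (ε τ t : ℝ) : HasDerivAt (barF1 ε τ) (barF2 ε τ t) t := by
  have hs := hasDerivAt_sin t
  have hc := hasDerivAt_cos t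
  have h := hc.mul ((((((hs.pow 2).const_mul (-3)).add ((hs.pow 4).const_mul 3)).const_mul ε).const_add 1).sub
    (hs.const_mul (4*τ)))
  refine HasDerivAt.congr_deriv (f := barF1 ε τ) h ?_
  simp only [barF2, barA, Pi.sub_apply, Pi.add_apply, Pi.pow_apply]
  push_cast
  ring

lemma barA_pos {ε τ t : ℝ} (hε0 : 0 ≤ ε) (hε1 : ε ≤ 1/100) (hτ0 : 0 ≤ τ) (hτ1 : τ ≤ 1/100) 
    (hs0 : 0 ≤ sin t) : 0 < barA ε τ t := by
  have hs1 := sin_le_one t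
  simp only [barA]
  generalize sin t = s at *
  have h1 : τ * s ≤ 1/100 * 1 := by gcongr
  have h2 : s^2 ≤ 1 := by nlinarith
  have h3 : ε * s^2 ≤ 1/100 * 1 := by gcongr
  have h4 : 0 ≤ ε * s^4 := by positivity
  nlinarith

lemma barF_pos {ε τ t : ℝ} (hε0 : 0 ≤ ε) (hε1 : ε ≤ 1/100) (hτ0 : 0 < τ) (hτ1 : τ ≤ 1/100) 
    (hs0 : 0 ≤ sin t) : 0 < barF ε τ t := by
  have hs1 := sin_le_one t
  simp only [barF]
  generalize sin t = s at *
  have hx1 : s^2 ≤ s := by nlinarith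
  have h1 : s^3 ≤ s := by nlinarith [sq_nonneg s]
  have h2 : ε * s^3 ≤ 1/100 * s := by gcongr
  have h3 : τ * s^2 ≤ 1/100 * s := by gcongr
  have h4 : 0 ≤ ε * s^5 := by positivity
  nlinarith

lemma barrier_strict {ε σ t D : ℝ} (hε0 : 0 ≤ ε) (hε1 : ε ≤ 1/100) (hσ : 0 < σ) (hσ1 : σ ≤ 1)
    (ht0 : 0 < t) (ht1 : t < π/2) (hD : 2 * tan t ≤ D) (hD' : 0.6 ≤ t → 2 * tan t + 20 * ε ≤ D) :
    barF2 ε (σ/100) t - D * barF1 ε (σ/100) t + (3 + ε/100 - σ) * barF ε (σ/100) t < 0 := by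
  have hc : 0 < cos t := cos_pos_of_mem_Ioo ⟨by linarith, ht1⟩
  have hs : 0 ≤ sin t := sin_nonneg_of_nonneg_of_le_pi ht0.le (by linarith [pi_pos])
  have hA := barA_pos (t := t) hε0 hε1 (by positivity : 0 ≤ σ/100) (by linarith) hs
  have htan : tan t * cos t = sin t := tan_mul_cos hc.ne'
  have hsc := sin_sq_add_cos_sq t
  obtain ⟨κ, hκ, hκD⟩ : ∃ κ : ℝ, (κ = 20 * ε ∨ (κ = 0 ∧ sin t ≤ 0.57)) ∧ 2 * tan t + κ ≤ D := by
    by_cases h : 0.6 ≤ t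
    · exact ⟨_, Or.inl rfl, hD' h⟩
    · push Not at h
      refine ⟨0, Or.inr ⟨rfl, ?_⟩, by linarith⟩
      have h1 : sin t ≤ sin 0.6 := by
        apply sin_le_sin_of_le_of_le_pi_div_two <;> linarith [pi_gt_three]
      have h2 := Real.sin_bound (x := 0.6) (by rw [abs_of_pos] <;> norm_num)
      rw [abs_le] at h2
      have h3 := h2.2
      rw [abs_of_pos (by norm_num)] at h3
      norm_num at h3 ⊢
      linarith
  have key := barrier_ineq_main hε0 hε1 hσ hσ1 rfl hs (sin_le_one t) hc hsc κ hκ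
  have h1 : (2 * tan t + κ) * (cos t * barA ε (σ/100) t) ≤ D * (cos t * barA ε (σ/100) t) := by
    gcongr
  have h2 : (2 * tan t + κ) * (cos t * barA ε (σ/100) t) = (2 * sin t + κ * cos t) * barA ε (σ/100) t := by
    rw [← htan]; ring
  have hcc : cos t ^ 2 = 1 - sin t ^2 := by linarith
  simp only [barF1, barF2, hcc]
  simp only [barF, barA] at *
  linarith

lemma endpoint_right {k : ℝ → ℝ} {c a b : ℝ} (hab : a < b) (h : HasDerivWithinAt k c (Icc a b) b)
    (hmax : ∀ y ∈ Icc a b, k y ≤ k b) : 0 ≤ c := by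
  have h2 : HasDerivWithinAt k c (Iio b) b := (h.mono Ioo_subset_Icc_self).mono_of_mem_nhdsWithin (Ioo_mem_nhdsLT hab)
  rw [hasDerivWithinAt_iff_tendsto_slope' (by simp)] at h2
  refine ge_of_tendsto h2 ?_
  filter_upwards [Ioo_mem_nhdsLT hab] with y hy
  rw [slope_def_field]
  exact div_nonneg_of_nonpos (by linarith [hmax y ⟨hy.1.le, hy.2.le⟩]) (by linarith [hy.2])

lemma endpoint_left {k : ℝ → ℝ} {c a b : ℝ} (hab : a < b) (h : HasDerivWithinAt k c (Icc a b) a)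
    (hmax : ∀ y ∈ Icc a b, k y ≤ k a) : c ≤ 0 := by
  have h2 : HasDerivWithinAt k c (Ioi a) a := (h.mono Ioo_subset_Icc_self).mono_of_mem_nhdsWithin (Ioo_mem_nhdsGT hab)
  rw [hasDerivWithinAt_iff_tendsto_slope' (by simp)] at h2
  refine le_of_tendsto h2 ?_
  filter_upwards [Ioo_mem_nhdsGT hab] with y hy
  rw [slope_def_field]
  exact div_nonpos_of_nonpos_of_nonneg (by linarith [hmax y ⟨hy.1.le, hy.2.le⟩]) (by linarith [hy.1])

lemma two_point {ps w p : ℝ → ℝ} {al be ε σ : ℝ} (hε0 : 0 ≤ ε) (hε1 : ε ≤ 1/100) (hσ : 0 < σ) (hσ1 : σ ≤ 1)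
    (hpi : be - al < π)
    (gA : ∀ x ∈ Icc al be, ∀ y ∈ Icc al be, x < y → 2 * tan ((y-x)/2) ≤ ps y - ps x)
    (gB : ∀ x ∈ Icc al be, ∀ y ∈ Icc al be, 1.2 ≤ y - x → 2 * tan ((y-x)/2) + 20 * ε ≤ ps y - ps x)
    (hw : ∀ t ∈ Icc al be, HasDerivWithinAt w (p t) (Icc al be) t)
    (hp : ∀ t ∈ Icc al be, HasDerivWithinAt p (2 * ps t * p t - (3 + ε/100 - σ) * w t) (Icc al be) t)
    (pa : p al = 0) (pb : p be = 0) (hex : ∃ x ∈ Icc al be, ∃ y ∈ Icc al be, x < y ∧ w x < w y) : False := by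
  have hτ0 : 0 < σ/100 := by positivity
  have hτ1 : σ/100 ≤ 1/100 := by linarith
  set F := barF ε (σ/100) with hF
  set F1 := barF1 ε (σ/100) with hF1
  set F2 := barF2 ε (σ/100) with hF2
  have dF : ∀ t, HasDerivAt F (F1 t) t := fun t => barF_deriv ε (σ/100) t
  have dF1 : ∀ t, HasDerivAt F1 (F2 t) t := fun t => barF1_deriv ε (σ/100) t
  have hFc : Continuous F := continuous_iff_continuousAt.2 fun t => (dF t).continuousAt
  have hsin : ∀ x ∈ Icc al be, ∀ y ∈ Icc al be, x ≤ y → 0 ≤ sin ((y-x)/2) := fun x hx y hy hxy =>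
    sin_nonneg_of_nonneg_of_le_pi (by linarith) (by linarith [hx.1, hy.2, pi_pos])
  have hFp : ∀ x ∈ Icc al be, ∀ y ∈ Icc al be, x ≤ y → 0 < F ((y-x)/2) := fun x hx y hy hxy =>
    barF_pos hε0 hε1 hτ0 hτ1 (hsin x hx y hy hxy)
  set T : Set (ℝ × ℝ) := (Icc al be ×ˢ Icc al be) ∩ {z | z.1 ≤ z.2} with hT
  have hTc : IsCompact T := (isCompact_Icc.prod isCompact_Icc).inter_right 
    (isClosed_le continuous_fst continuous_snd)
  have hwc : ContinuousOn w (Icc al be) := fun t ht => (hw t ht).continuousWithinAt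
  have hQc : ContinuousOn (fun z : ℝ × ℝ => (w z.2 - w z.1) / F ((z.2 - z.1)/2)) T := by
    refine ContinuousOn.div ?_ ?_ ?_
    · refine ContinuousOn.sub ?_ ?_
      · exact hwc.comp continuous_snd.continuousOn (fun z hz => hz.1.2)
      · exact hwc.comp continuous_fst.continuousOn (fun z hz => hz.1.1)
    · exact (hFc.comp (by fun_prop)).continuousOn
    · intro z hz
      exact (hFp z.1 hz.1.1 z.2 hz.1.2 hz.2).ne'
  obtain ⟨x1, hx1, y1, hy1, hxy1, hwxy⟩ := hex
  obtain ⟨⟨x, y⟩, hz, hmax⟩ := hTc.exists_isMaxOn ⟨(x1, y1), ⟨hx1, hy1⟩, hxy1.le⟩ hQc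
  obtain ⟨⟨hx, hy⟩, hxy⟩ := hz
  simp only at hx hy
  have hxy : x ≤ y := hxy
  set Q := (w y - w x) / F ((y-x)/2) with hQ
  have hmax' : ∀ x' ∈ Icc al be, ∀ y' ∈ Icc al be, x' ≤ y' → w y' - w x' ≤ Q * F ((y'-x')/2) := by
    intro x' hx' y' hy' h
    have := hmax (show (x', y') ∈ T from ⟨⟨hx', hy'⟩, h⟩)
    simp only [Set.mem_ofPred_eq] at this
    rwa [div_le_iff₀ (hFp x' hx' y' hy' h)] at this
  have heq : w y - w x = Q * F ((y-x)/2) := by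
    rw [hQ, div_mul_cancel₀ _ (hFp x hx y hy hxy).ne']
  have hQ0 : 0 < Q := by
    have h1 := hmax' x1 hx1 y1 hy1 hxy1.le
    have h2 := hFp x1 hx1 y1 hy1 hxy1.le
    by_contra h
    push Not at h
    have := mul_nonpos_of_nonpos_of_nonneg h h2.le
    linarith
  have hlt : x < y := by
    rcases hxy.lt_or_eq with h | h
    · exact h
    · subst h
      have := hFp x hx x hx le_rfl
      have := mul_pos hQ0 this
      linarith
  set t := (y - x)/2 with ht
  have ht0 : 0 < t := by rw [ht]; linarith
  have ht1 : t < π/2 := by rw [ht]; linarith [hx.1, hy.2]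
  have hF1p : 0 < F1 t := mul_pos (cos_pos_of_mem_Ioo ⟨by linarith, ht1⟩) 
    (barA_pos hε0 hε1 hτ0.le hτ1 (hsin x hx y hy hxy))
  -- the two partial functions
  have dy : HasDerivWithinAt (fun y' => w y' - w x - Q * F ((y'-x)/2)) (p y - Q * (F1 t * (1/2))) (Icc al be) y := by
    have h1 : HasDerivAt (fun y' : ℝ => (y' - x)/2) (1/2) y := ((hasDerivAt_id y).sub_const x).div_const 2
    have h2 : HasDerivAt (fun y' => F ((y'-x)/2)) (F1 t * (1/2)) y := HasDerivAt.comp (h₂ := F) (h := fun y' => (y'-x)/2) y (dF ((y-x)/2)) h1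
    exact ((hw y hy).sub_const _).sub (h2.const_mul Q).hasDerivWithinAt
  have dx : HasDerivWithinAt (fun x' => w y - w x' - Q * F ((y-x')/2)) (- p x - Q * (F1 t * (-1/2))) (Icc al be) x := by
    have h1 : HasDerivAt (fun x' : ℝ => (y - x')/2) (-1/2) x := ((hasDerivAt_id x).const_sub y).div_const 2
    have h2 : HasDerivAt (fun x' => F ((y-x')/2)) (F1 t * (-1/2)) x := HasDerivAt.comp (h₂ := F) (h := fun x' => (y-x')/2) x (dF ((y-x)/2)) h1
    exact ((hw x hx).const_sub _).sub (h2.const_mul Q).hasDerivWithinAt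
  have hyb : y < be := by
    rcases hy.2.lt_or_eq with h | h
    · exact h
    · exfalso
      have := endpoint_right hlt (dy.mono (Icc_subset_Icc hx.1 hy.2)) (fun y' hy' => by
        have := hmax' x hx y' ⟨hx.1.trans hy'.1, hy'.2.trans hy.2⟩ hy'.1
        linarith)
      rw [h, pb] at this
      nlinarith
  have hax : al < x := by
    rcases hx.1.lt_or_eq with h | h
    · exact h
    · exfalso
      have := endpoint_left hlt (dx.mono (Icc_subset_Icc hx.1 hy.2)) (fun x' hx' => by
        have := hmax' x' ⟨hx.1.trans hx'.1, hx'.2.trans hy.2⟩ y hy hx'.2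
        linarith)
      rw [← h, pa] at this
      nlinarith
  have py : p y = Q * F1 t / 2 := by
    have h1 := dy.hasDerivAt (Icc_mem_nhds (hax.trans hlt) hyb)
    have h2 : IsLocalMax (fun y' => w y' - w x - Q * F ((y'-x)/2)) y := by
      filter_upwards [Icc_mem_nhds hlt hyb] with y' hy'
      have := hmax' x hx y' ⟨hx.1.trans hy'.1, hy'.2⟩ hy'.1
      linarith
    have := h2.hasDerivAt_eq_zero h1
    linarith
  have px : p x = Q * F1 t / 2 := by
    have h1 := dx.hasDerivAt (Icc_mem_nhds hax (hlt.trans hyb))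
    have h2 : IsLocalMax (fun x' => w y - w x' - Q * F ((y-x')/2)) x := by
      filter_upwards [Icc_mem_nhds hax hlt] with x' hx'
      have := hmax' x' ⟨hx'.1, hx'.2.trans hy.2⟩ y hy hx'.2
      linarith
    have := h2.hasDerivAt_eq_zero h1
    linarith
  -- second-order condition along the anti-diagonal
  have hw' : ∀ s ∈ Ioo al be, HasDerivAt w (p s) s := fun s hs => 
    (hw s ⟨hs.1.le, hs.2.le⟩).hasDerivAt (Icc_mem_nhds hs.1 hs.2)
  have hp' : ∀ s ∈ Ioo al be, HasDerivAt p (2 * ps s * p s - (3 + ε/100 - σ) * w s) s := fun s hs => 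
    (hp s ⟨hs.1.le, hs.2.le⟩).hasDerivAt (Icc_mem_nhds hs.1 hs.2)
  have hI : ∀ᶠ r in nhds (0:ℝ), y + r ∈ Ioo al be ∧ x - r ∈ Ioo al be ∧ x - r ≤ y + r := by
    have c1 : Tendsto (fun r : ℝ => y + r) (nhds 0) (nhds y) := by
      have : Continuous (fun r : ℝ => y + r) := by fun_prop
      simpa using this.tendsto 0
    have c2 : Tendsto (fun r : ℝ => x - r) (nhds 0) (nhds x) := by
      have : Continuous (fun r : ℝ => x - r) := by fun_prop
      simpa using this.tendsto 0
    filter_upwards [c1 (Ioo_mem_nhds (hax.trans hlt) hyb), c2 (Ioo_mem_nhds hax (hlt.trans hyb)),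
      c1 (lt_mem_nhds (show (x+y)/2 < y by linarith)), c2 (gt_mem_nhds (show x < (x+y)/2 by linarith))] with r h1 h2 h3 h4
    exact ⟨h1, h2, (h4.trans h3).le⟩
  have hsec := second_deriv_test (φ := fun r => w (y + r) - w (x - r) - Q * F (t + r))
    (φ' := fun r => p (y + r) + p (x - r) - Q * F1 (t + r)) (t0 := 0) 
    (c := (2 * ps y * p y - (3 + ε/100 - σ) * w y) - (2 * ps x * p x - (3 + ε/100 - σ) * w x) - Q * F2 t) ?_ ?_ ?_
  · have hstr := barrier_strict (D := ps y - ps x) hε0 hε1 hσ hσ1 ht0 ht1 (gA x hx y hy hlt)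
      (fun h => gB x hx y hy (by rw [ht] at h; linarith))
    rw [px, py] at hsec
    have : (ps y - ps x) * (Q * F1 t) - (3 + ε/100 - σ) * (w y - w x) - Q * F2 t ≤ 0 := by linarith
    rw [heq] at this
    have h2 := mul_neg_of_pos_of_neg hQ0 hstr
    simp only [← hF, ← hF1, ← hF2] at h2
    linarith
  · filter_upwards [hI] with r hr
    have a1 : HasDerivAt (fun r => w (y + r)) (p (y + r)) r := by
      simpa using (hw' _ hr.1).comp_const_add y r
    have a2 : HasDerivAt (fun r => w (x - r)) (- p (x - r)) r := by
      simpa using (hw' _ hr.2.1).comp_const_sub x r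
    have a3 : HasDerivAt (fun r => F (t + r)) (F1 (t + r)) r := (dF _).comp_const_add t r
    exact ((a1.sub a2).sub (a3.const_mul Q)).congr_deriv (by ring)
  · have a1 : HasDerivAt (fun r => p (y + r)) (2 * ps y * p y - (3 + ε/100 - σ) * w y) 0 := by
      apply HasDerivAt.comp_const_add
      rw [add_zero]; exact hp' y ⟨hax.trans hlt, hyb⟩
    have a2 : HasDerivAt (fun r => p (x - r)) (- (2 * ps x * p x - (3 + ε/100 - σ) * w x)) 0 := by
      apply HasDerivAt.comp_const_sub
      rw [sub_zero]; exact hp' x ⟨hax, hlt.trans hyb⟩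
    have a3 : HasDerivAt (fun r => F1 (t + r)) (F2 t) 0 := by
      apply HasDerivAt.comp_const_add
      rw [add_zero]; exact dF1 t
    exact ((a1.add a2).sub (a3.const_mul Q)).congr_deriv (by ring)
  · filter_upwards [hI] with r hr
    have := hmax' (x - r) ⟨hr.2.1.1.le, hr.2.1.2.le⟩ (y + r) ⟨hr.1.1.le, hr.1.2.le⟩ hr.2.2
    have e : (y + r - (x - r))/2 = t + r := by rw [ht]; ring
    rw [e] at this
    simp only [add_zero, sub_zero]
    linarith

lemma p_pos {ps : ℝ → ℝ} (hps : Continuous ps) {al be ε σ : ℝ} (hε0 : 0 ≤ ε) (hε1 : ε ≤ 1/100) (hσ : 0 < σ) (hσ1 : σ ≤ 1)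
    (hab : al < be) (hpi : be - al < π)
    (gA : ∀ x ∈ Icc al be, ∀ y ∈ Icc al be, x < y → 2 * tan ((y-x)/2) ≤ ps y - ps x)
    (gB : ∀ x ∈ Icc al be, ∀ y ∈ Icc al be, 1.2 ≤ y - x → 2 * tan ((y-x)/2) + 20 * ε ≤ ps y - ps x) :
    ∃ w p : ℝ → ℝ, (∀ t ∈ Icc al be, HasDerivWithinAt w (p t) (Icc al be) t) ∧
      (∀ t ∈ Icc al be, HasDerivWithinAt p (2 * ps t * p t - (3 + ε/100 - σ) * w t) (Icc al be) t) ∧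
      ∀ t ∈ Ioc al be, 0 < p t := by
  obtain ⟨w, p, w0, p0, hwp⟩ := ode_exists ps hps (3 + ε/100 - σ) al be hab
  have hw := fun t ht => (hwp t ht).1
  have hp := fun t ht => (hwp t ht).2
  refine ⟨w, p, hw, hp, ?_⟩
  have hloc : ∀ᶠ t in nhdsWithin al (Ioi al), 0 < p t := by
    have h2 : HasDerivWithinAt p (2 * ps al * p al - (3 + ε/100 - σ) * w al) (Ioi al) al :=
      ((hp al ⟨le_rfl, hab.le⟩).mono Ioo_subset_Icc_self).mono_of_mem_nhdsWithin (Ioo_mem_nhdsGT hab)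
    rw [hasDerivWithinAt_iff_tendsto_slope' (by simp), w0, p0] at h2
    have h3 := h2.eventually (lt_mem_nhds (show (0:ℝ) < _ by nlinarith))
    filter_upwards [h3, self_mem_nhdsWithin] with t ht ht'
    rw [slope_def_field, p0, sub_zero] at ht
    have : (0:ℝ) < t - al := sub_pos.2 ht'
    exact (div_pos_iff_of_pos_right this).1 ht
  obtain ⟨c, hc, hcp⟩ := (mem_nhdsGT_iff_exists_Ioo_subset' hab).1 hloc
  have hc' : al < c := hc
  intro t ht
  by_contra hneg
  push Not at hneg
  set s := (al + min t c)/2 with hs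
  have hm : al < min t c := lt_min ht.1 hc'
  have hs1 : al < s := by linarith
  have hst : s < t := by have := min_le_left t c; linarith
  have hsc : s < c := by have := min_le_right t c; linarith
  have hps' : 0 < p s := hcp ⟨hs1, hsc⟩
  have hpc : ContinuousOn p (Icc al be) := fun t ht => (hp t ht).continuousWithinAt
  have hwc : ContinuousOn w (Icc al be) := fun t ht => (hw t ht).continuousWithinAt
  obtain ⟨z, hz, hz0⟩ := intermediate_value_Icc' hst.le (hpc.mono (Icc_subset_Icc hs1.le ht.2)) ⟨hneg, hps'.le⟩
  have hsub : Icc al z ⊆ Icc al be := Icc_subset_Icc le_rfl (hz.2.trans ht.2)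
  have hsm : StrictMonoOn w (Icc al s) := by
    refine strictMonoOn_of_deriv_pos (convex_Icc _ _) (hwc.mono (Icc_subset_Icc le_rfl (hst.le.trans ht.2))) ?_
    intro x hx
    rw [interior_Icc] at hx
    have hxb : x < be := hx.2.trans (hst.trans_le ht.2)
    rw [((hw x ⟨hx.1.le, hxb.le⟩).hasDerivAt (Icc_mem_nhds hx.1 hxb)).deriv]
    exact hcp ⟨hx.1, hx.2.trans hsc⟩
  refine two_point (al := al) (be := z) hε0 hε1 hσ hσ1 (by linarith [hz.2, ht.2])
    (fun x hx y hy => gA x (hsub hx) y (hsub hy)) (fun x hx y hy => gB x (hsub hx) y (hsub hy))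
    (fun t ht => (hw t (hsub ht)).mono hsub) (fun t ht => (hp t (hsub ht)).mono hsub) p0 hz0
    ⟨al, ⟨le_rfl, hs1.le.trans hz.1⟩, s, ⟨hs1.le, hz.1⟩, hs1, hsm ⟨le_rfl, hs1.le⟩ ⟨hs1.le, le_rfl⟩ hs1⟩

lemma jacobi {ps : ℝ → ℝ} (hps : Continuous ps) {al be ε σ : ℝ} (hε0 : 0 ≤ ε) (hε1 : ε ≤ 1/100) (hσ : 0 < σ) (hσ1 : σ ≤ 1)
    (hpi : be - al < π)
    (gA : ∀ x ∈ Icc al be, ∀ y ∈ Icc al be, x < y → 2 * tan ((y-x)/2) ≤ ps y - ps x)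
    (gB : ∀ x ∈ Icc al be, ∀ y ∈ Icc al be, 1.2 ≤ y - x → 2 * tan ((y-x)/2) + 20 * ε ≤ ps y - ps x)
    {a' b' : ℝ} (ha : al < a') (hab' : a' ≤ b') (hb : b' < be) {v : ℝ → ℝ} (hv : ContDiff ℝ 1 v)
    (va : v a' = 0) (vb : v b' = 0) :
    ∫ x in a'..b', (3 + ε/100 - σ) * v x ^ 2 ≤ ∫ x in a'..b', (deriv v x - ps x * v x)^2 := by
  obtain ⟨w, p, hw, hp, hpos⟩ := p_pos hps hε0 hε1 hσ hσ1 (ha.trans_le (hab'.trans hb.le)) hpi gA gB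
  set l := 3 + ε/100 - σ with hl
  have hsub : Icc a' b' ⊆ Ioo al be := fun x hx => ⟨ha.trans_le hx.1, hx.2.trans_lt hb⟩
  have hwc : ContinuousOn w (Icc a' b') := fun t ht => ((hw t (Ioo_subset_Icc_self (hsub ht))).continuousWithinAt).mono
    (hsub.trans Ioo_subset_Icc_self)
  have hpc : ContinuousOn p (Icc a' b') := fun t ht => ((hp t (Ioo_subset_Icc_self (hsub ht))).continuousWithinAt).mono
    (hsub.trans Ioo_subset_Icc_self)
  have hpp : ∀ t ∈ Icc a' b', 0 < p t := fun t ht => hpos t ⟨(hsub ht).1, (hsub ht).2.le⟩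
  have hvc : Continuous v := hv.continuous
  have hdc : Continuous (deriv v) := hv.continuous_deriv le_rfl
  set r : ℝ → ℝ := fun t => l * w t / p t with hr
  have hrc : ContinuousOn r (Icc a' b') := (continuousOn_const.mul hwc).div hpc (fun t ht => (hpp t ht).ne')
  set A : ℝ → ℝ := fun x => (deriv v x - ps x * v x)^2 with hA
  set B : ℝ → ℝ := fun x => l * v x ^ 2 with hB
  set C : ℝ → ℝ := fun x => (deriv v x - ps x * v x + r x * v x)^2 with hC
  have hAi : IntervalIntegrable A volume a' b' := Continuous.intervalIntegrable (by fun_prop) _ _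
  have hBi : IntervalIntegrable B volume a' b' := Continuous.intervalIntegrable (by fun_prop) _ _
  have hCi : IntervalIntegrable C volume a' b' := by
    apply ContinuousOn.intervalIntegrable
    rw [uIcc_of_le hab']
    refine ContinuousOn.pow (ContinuousOn.add (by fun_prop) (hrc.mul hvc.continuousOn)) 2
  have hft : ∫ x in a'..b', (C x - (A x - B x)) = r b' * v b' ^ 2 - r a' * v a' ^ 2 := by
    refine intervalIntegral.integral_eq_sub_of_hasDerivAt (f := fun x => r x * v x ^ 2) ?_ (hCi.sub (hAi.sub hBi))
    rw [uIcc_of_le hab']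
    intro x hx
    have hx' := hsub hx
    have h1 := (hw x (Ioo_subset_Icc_self hx')).hasDerivAt (Icc_mem_nhds hx'.1 hx'.2)
    have h2 := (hp x (Ioo_subset_Icc_self hx')).hasDerivAt (Icc_mem_nhds hx'.1 hx'.2)
    have h3 := (hv.differentiable one_ne_zero x).hasDerivAt
    have h4 := ((h1.const_mul l).div h2 (hpp x hx).ne').mul (h3.pow 2)
    refine HasDerivAt.congr_deriv (f := fun x => r x * v x ^ 2) h4 ?_
    have := (hpp x hx).ne'
    simp only [hA, hB, hC, hr, Pi.pow_apply, Pi.div_apply]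
    field_simp
    push_cast
    ring
  rw [va, vb] at hft
  rw [intervalIntegral.integral_sub hCi (hAi.sub hBi), intervalIntegral.integral_sub hAi hBi] at hft
  have hC0 : 0 ≤ ∫ x in a'..b', C x := intervalIntegral.integral_nonneg hab' (fun x _ => sq_nonneg _)
  simp only [ne_eq, OfNat.ofNat_ne_zero, not_false_eq_true, zero_pow, mul_zero, sub_zero] at hft
  linarith

def stek (ps : ℝ → ℝ) (η x : ℝ) : ℝ := η⁻¹ * ((∫ s in (0:ℝ)..(x+η), ps s) - ∫ s in (0:ℝ)..x, ps s)

lemma stek_cont {ps : ℝ → ℝ} (hm : Monotone ps) (η : ℝ) : Continuous (stek ps η) := by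
  have hi : ∀ a b, IntervalIntegrable ps volume a b := fun a b => hm.intervalIntegrable
  have hc := intervalIntegral.continuous_primitive hi 0
  unfold stek
  exact continuous_const.mul ((hc.comp (continuous_id.add continuous_const)).sub hc)

lemma stek_eq {ps : ℝ → ℝ} (hm : Monotone ps) {η : ℝ} (hη : 0 < η) (x : ℝ) :
    stek ps η x = ∫ s in (0:ℝ)..1, ps (x + η * s) := by
  have hi : ∀ a b, IntervalIntegrable ps volume a b := fun a b => hm.intervalIntegrable
  rw [stek, intervalIntegral.integral_interval_sub_left (hi _ _) (hi _ _),
    intervalIntegral.integral_comp_add_mul _ hη.ne']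
  simp

lemma stek_int {ps : ℝ → ℝ} (hm : Monotone ps) {η : ℝ} (hη : 0 < η) (x : ℝ) :
    IntervalIntegrable (fun s => ps (x + η * s)) volume 0 1 := by
  apply Monotone.intervalIntegrable
  intro s t hst
  apply hm
  gcongr

lemma stek_bounds {ps : ℝ → ℝ} (hm : Monotone ps) {η : ℝ} (hη : 0 < η) (x : ℝ) :
    ps x ≤ stek ps η x ∧ stek ps η x ≤ ps (x + η) := by
  rw [stek_eq hm hη]
  constructor
  · have := intervalIntegral.integral_mono_on (a := 0) (b := 1) (f := fun _ => ps x) zero_le_one (by simp) (stek_int hm hη x)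
      (fun s hs => hm (by nlinarith [hs.1]))
    simpa using this
  · have := intervalIntegral.integral_mono_on (a := 0) (b := 1) (g := fun _ => ps (x + η)) zero_le_one (stek_int hm hη x) (by simp)
      (fun s hs => hm (by nlinarith [hs.2]))
    simpa using this

lemma stek_gap {ps : ℝ → ℝ} (hm : Monotone ps) {η : ℝ} (hη : 0 < η) {x y c : ℝ}
    (h : ∀ s ∈ Icc (0:ℝ) 1, c ≤ ps (y + η * s) - ps (x + η * s)) : c ≤ stek ps η y - stek ps η x := by
  rw [stek_eq hm hη, stek_eq hm hη, ← intervalIntegral.integral_sub (stek_int hm hη y) (stek_int hm hη x)]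
  have := intervalIntegral.integral_mono_on (a := 0) (b := 1) (f := fun _ => c) zero_le_one (by simp)
    ((stek_int hm hη y).sub (stek_int hm hη x)) h
  simpa using this

lemma steklov_ineq {ps : ℝ → ℝ} (hm : Monotone ps) {al be ε : ℝ} (hε0 : 0 ≤ ε) (hε1 : ε ≤ 1/100)
    (hpi : be - al < π)
    (gA : ∀ x ∈ Icc al be, ∀ y ∈ Icc al be, x < y → 2 * tan ((y-x)/2) ≤ ps y - ps x)
    (gB : ∀ x ∈ Icc al be, ∀ y ∈ Icc al be, 1.2 ≤ y - x → 2 * tan ((y-x)/2) + 20 * ε ≤ ps y - ps x)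
    {a' b' : ℝ} (ha : al < a') (hab' : a' ≤ b') (hb : b' < be) {v : ℝ → ℝ} (hv : ContDiff ℝ 1 v)
    (va : v a' = 0) (vb : v b' = 0) :
    (3 + ε/100) * (∫ x in a'..b', v x ^ 2) ≤ ∫ x in a'..b', (deriv v x - ps x * v x)^2 := by
  have hvc : Continuous v := hv.continuous
  have hdc : Continuous (deriv v) := hv.continuous_deriv le_rfl
  set Q := ∫ x in a'..b', (deriv v x - ps x * v x)^2 with hQ
  set I := ∫ x in a'..b', v x ^ 2 with hI
  have hI0 : 0 ≤ I := intervalIntegral.integral_nonneg hab' (fun x _ => sq_nonneg _)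
  have key : ∀ σ : ℝ, 0 < σ → σ ≤ 1 → (3 + ε/100 - σ) * I ≤ Q := by
    intro σ hσ hσ1
    set η : ℕ → ℝ := fun n => (be - b')/2 * (1 / ((n:ℝ) + 1)) with hη
    have hη0 : ∀ n, 0 < η n := fun n => by
      have : 0 < be - b' := by linarith
      simp only [hη]; positivity
    have hη1 : ∀ n, η n ≤ (be - b')/2 := fun n => by
      have h1 : (1:ℝ) / ((n:ℝ)+1) ≤ 1 := by
        rw [div_le_one (by positivity)]; linarith [(Nat.cast_nonneg n : (0:ℝ) ≤ n)]
      have : (be - b')/2 * (1 / ((n:ℝ) + 1)) ≤ (be - b')/2 * 1 := by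
        gcongr
      simpa [hη] using this
    have hηt : Tendsto η atTop (nhds 0) := by
      have := (tendsto_one_div_add_atTop_nhds_zero_nat (𝕜 := ℝ)).const_mul ((be - b')/2)
      rwa [mul_zero] at this
    have hn : ∀ n, (3 + ε/100 - σ) * I ≤ ∫ x in a'..b', (deriv v x - stek ps (η n) x * v x)^2 := by
      intro n
      rw [hI, ← intervalIntegral.integral_const_mul]
      have hsh : ∀ x ∈ Icc al ((b'+be)/2), ∀ s ∈ Icc (0:ℝ) 1, x + η n * s ∈ Icc al be := by
        intro x hx s hs
        have := hη0 n
        have := hη1 n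
        refine ⟨?_, ?_⟩
        · nlinarith [hx.1, hs.1]
        · nlinarith [hx.2, hs.2]
      refine jacobi (al := al) (be := (b'+be)/2) (stek_cont hm (η n)) hε0 hε1 hσ hσ1 (by linarith) ?_ ?_ ha hab' (by linarith) hv va vb
      · intro x hx y hy hxy
        apply stek_gap hm (hη0 n)
        intro s hs
        have := gA _ (hsh x hx s hs) _ (hsh y hy s hs) (by linarith)
        rwa [add_sub_add_right_eq_sub] at this
      · intro x hx y hy hxy
        apply stek_gap hm (hη0 n)
        intro s hs
        have := gB _ (hsh x hx s hs) _ (hsh y hy s hs) (by linarith)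
        rwa [add_sub_add_right_eq_sub] at this
    refine ge_of_tendsto (x := atTop) ?_ (Eventually.of_forall hn)
    obtain ⟨V0, hV0⟩ := (isCompact_Icc (a := a') (b := b')).exists_bound_of_continuousOn hvc.continuousOn
    obtain ⟨V1, hV1⟩ := (isCompact_Icc (a := a') (b := b')).exists_bound_of_continuousOn hdc.continuousOn
    set B := |ps a'| + |ps be| with hB
    refine intervalIntegral.tendsto_integral_filter_of_dominated_convergence (fun _ => (V1 + B * V0)^2) ?_ ?_ (by simp) ?_
    · refine Eventually.of_forall fun n => ?_
      have := stek_cont hm (η n)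
      exact Continuous.aestronglyMeasurable (by fun_prop)
    · refine Eventually.of_forall fun n => Eventually.of_forall fun x hx => ?_
      rw [uIoc_of_le hab'] at hx
      have hx' : x ∈ Icc a' b' := ⟨hx.1.le, hx.2⟩
      have h0 := hV0 x hx'
      have h1 := hV1 x hx'
      have hs := stek_bounds hm (hη0 n) x
      have hsB : |stek ps (η n) x| ≤ B := by
        have e1 : ps a' ≤ ps x := hm hx'.1
        have e2 : ps (x + η n) ≤ ps be := hm (by linarith [hη1 n, hx'.2])
        rw [abs_le]
        constructor
        · linarith [neg_abs_le (ps a'), abs_nonneg (ps be)]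
        · linarith [le_abs_self (ps be), abs_nonneg (ps a')]
      rw [Real.norm_eq_abs] at *
      rw [abs_pow]
      gcongr
      calc |deriv v x - stek ps (η n) x * v x| ≤ |deriv v x| + |stek ps (η n) x * v x| := abs_sub _ _
        _ ≤ V1 + B * V0 := by
          rw [abs_mul]; gcongr
    · have hcount : {x | ¬ ContinuousAt ps x}.Countable := hm.countable_not_continuousAt
      have := hcount.ae_notMem volume
      filter_upwards [this] with x hx _
      have hx : ContinuousAt ps x := by simpa using hx
      have hst : Tendsto (fun n => stek ps (η n) x) atTop (nhds (ps x)) := by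
        refine tendsto_of_tendsto_of_tendsto_of_le_of_le tendsto_const_nhds ?_ (fun n => (stek_bounds hm (hη0 n) x).1)
          (fun n => (stek_bounds hm (hη0 n) x).2)
        refine Tendsto.comp hx ?_
        simpa using hηt.const_add x
      exact (tendsto_const_nhds.sub (hst.mul_const _)).pow 2
  refine le_of_forall_pos_le_add fun e he => ?_
  have hs : 0 < min 1 (e/(I+1)) := by positivity
  have h1 := key (min 1 (e/(I+1))) hs (min_le_left _ _)
  have h2 : min 1 (e/(I+1)) * I ≤ e/(I+1) * (I+1) := by
    gcongr
    · exact min_le_right _ _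
    · linarith
  rw [div_mul_cancel₀ _ (by positivity)] at h2
  linarith

lemma by_parts {ps : ℝ → ℝ} (hm : Monotone ps) {nu : Measure ℝ} {al be : ℝ} (hab : al ≤ be)
    (hnu : ∀ y ∈ Icc al be, nu (Ioc al y) = ENNReal.ofReal (ps y - ps al)) {F : ℝ → ℝ} (hF : ContDiff ℝ 1 F)
    (Fa : F al = 0) (Fb : F be = 0) :
    ∫ x in Ioc al be, F x ∂nu = - ∫ x in al..be, deriv F x * ps x := by
  have hdc : Continuous (deriv F) := hF.continuous_deriv le_rfl
  have : IsFiniteMeasure (nu.restrict (Ioc al be)) := ⟨by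
    rw [Measure.restrict_apply_univ, hnu be ⟨hab, le_rfl⟩]; exact ENNReal.ofReal_lt_top⟩
  have hder : ∀ x, HasDerivAt F (deriv F x) x := fun x => (hF.differentiable one_ne_zero x).hasDerivAt
  obtain ⟨V, hV⟩ := (isCompact_Icc (a := al) (b := be)).exists_bound_of_continuousOn hdc.continuousOn
  set G : ℝ → ℝ → ℝ := fun x y => (Iic y).indicator (fun _ => - deriv F y) x with hG
  have hmS : MeasurableSet {z : ℝ × ℝ | z.1 ≤ z.2} := measurableSet_le measurable_fst measurable_snd
  have hGu : Function.uncurry G = {z : ℝ × ℝ | z.1 ≤ z.2}.indicator (fun z => - deriv F z.2) := by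
    ext z
    simp only [Function.uncurry, hG, indicator, mem_Iic]
    rfl
  have hIntG : Integrable (Function.uncurry G) ((nu.restrict (Ioc al be)).prod (volume.restrict (Ioc al be))) := by
    rw [hGu]
    refine Integrable.indicator ?_ hmS
    have h1 : Integrable (fun y => - deriv F y) (volume.restrict (Ioc al be)) :=
      ((hdc.neg).integrableOn_Icc).mono_set Ioc_subset_Icc_self
    exact h1.comp_snd _
  have hsw := integral_integral_swap hIntG
  have hL : ∀ x ∈ Ioc al be, ∫ y in Ioc al be, G x y = F x := by
    intro x hx
    have e : ∀ y, G x y = (Ici x).indicator (fun y => - deriv F y) y := fun y => by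
      simp only [hG, indicator, mem_Iic, mem_Ici]
    simp_rw [e]
    rw [setIntegral_indicator measurableSet_Ici]
    have : Ioc al be ∩ Ici x = Icc x be := by
      ext y; simp only [mem_inter_iff, mem_Ioc, mem_Ici, mem_Icc]
      constructor
      · rintro ⟨h1, h2⟩; exact ⟨h2, h1.2⟩
      · rintro ⟨h1, h2⟩; exact ⟨⟨hx.1.trans_le h1, h2⟩, h1⟩
    rw [this, integral_Icc_eq_integral_Ioc, ← intervalIntegral.integral_of_le hx.2, intervalIntegral.integral_neg,
      intervalIntegral.integral_eq_sub_of_hasDerivAt (fun y _ => hder y) (hdc.intervalIntegrable _ _), Fb]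
    ring
  have hR : ∀ y ∈ Ioc al be, ∫ x in Ioc al be, G x y ∂nu = - (deriv F y * ps y) + ps al * deriv F y := by
    intro y hy
    simp only [hG]
    rw [setIntegral_indicator measurableSet_Iic, setIntegral_const]
    have : Ioc al be ∩ Iic y = Ioc al y := by
      ext x; simp only [mem_inter_iff, mem_Ioc, mem_Iic]
      constructor
      · rintro ⟨h1, h2⟩; exact ⟨h1.1, h2⟩
      · rintro ⟨h1, h2⟩; exact ⟨⟨h1, h2.trans hy.2⟩, h2⟩
    rw [this, measureReal_def, hnu y ⟨hy.1.le, hy.2⟩, ENNReal.toReal_ofReal (sub_nonneg.2 (hm hy.1.le)), smul_eq_mul]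
    ring
  rw [setIntegral_congr_fun measurableSet_Ioc hL, setIntegral_congr_fun measurableSet_Ioc hR] at hsw
  rw [hsw, ← intervalIntegral.integral_of_le hab]
  have hi : IntervalIntegrable (fun y => deriv F y * ps y) volume al be :=
    (hm.intervalIntegrable).continuousOn_mul hdc.continuousOn
  have hi' : IntervalIntegrable (fun y => -(deriv F y * ps y)) volume al be := hi.neg
  rw [intervalIntegral.integral_add hi' ((hdc.intervalIntegrable _ _).const_mul _), intervalIntegral.integral_neg,
    intervalIntegral.integral_const_mul, intervalIntegral.integral_eq_sub_of_hasDerivAt (fun y _ => hder y) (hdc.intervalIntegrable _ _), Fa, Fb]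
  ring

lemma energy_eq {ps : ℝ → ℝ} (hm : Monotone ps) {nu : Measure ℝ} {al be : ℝ} (hab : al ≤ be)
    (hnu : ∀ y ∈ Icc al be, nu (Ioc al y) = ENNReal.ofReal (ps y - ps al)) {v : ℝ → ℝ} (hv : ContDiff ℝ 1 v)
    (va : v al = 0) (vb : v be = 0) :
    (∫⁻ x in Ioc al be, ENNReal.ofReal (deriv v x ^ 2)) + (∫⁻ x in Ioc al be, ENNReal.ofReal (v x ^ 2) ∂nu)
      + (∫⁻ x in Ioc al be, ENNReal.ofReal (ps x ^ 2 * v x ^ 2)) =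
      ENNReal.ofReal (∫ x in al..be, (deriv v x - ps x * v x)^2) := by
  have hvc : Continuous v := hv.continuous
  have hdc : Continuous (deriv v) := hv.continuous_deriv le_rfl
  have : IsFiniteMeasure (nu.restrict (Ioc al be)) := ⟨by
    rw [Measure.restrict_apply_univ, hnu be ⟨hab, le_rfl⟩]; exact ENNReal.ofReal_lt_top⟩
  have i1 : IntervalIntegrable (fun x => deriv v x ^ 2) volume al be := Continuous.intervalIntegrable (by fun_prop) _ _
  have i2 : Integrable (fun x => v x ^ 2) (nu.restrict (Ioc al be)) := by
    obtain ⟨V, hV⟩ := (isCompact_Icc (a := al) (b := be)).exists_bound_of_continuousOn (hvc.pow 2).continuousOn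
    refine Integrable.of_bound (hvc.pow 2).aestronglyMeasurable V ?_
    refine (ae_restrict_iff' measurableSet_Ioc).2 (Eventually.of_forall fun x hx => hV x ⟨hx.1.le, hx.2⟩)
  have i3' : IntervalIntegrable (fun x => ps x * ps x) volume al be := by
    rw [intervalIntegrable_iff, uIoc_of_le hab]
    have h1 : IntegrableOn ps (Ioc al be) := by
      have := hm.intervalIntegrable (μ := volume) (a := al) (b := be)
      rwa [intervalIntegrable_iff, uIoc_of_le hab] at this
    refine Integrable.bdd_mul (c := |ps al| + |ps be|) h1 hm.measurable.aestronglyMeasurable ?_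
    refine (ae_restrict_iff' measurableSet_Ioc).2 (Eventually.of_forall fun x hx => ?_)
    have e1 := hm hx.1.le
    have e2 := hm hx.2
    rw [Real.norm_eq_abs, abs_le]
    constructor
    · linarith [neg_abs_le (ps al), abs_nonneg (ps be)]
    · linarith [le_abs_self (ps be), abs_nonneg (ps al)]
  have i3 : IntervalIntegrable (fun x => ps x ^ 2 * v x ^ 2) volume al be := by
    have := i3'.mul_continuousOn (hvc.pow 2).continuousOn
    refine this.congr (fun x _ => ?_)
    simp only [Pi.pow_apply]; ring
  have hvd : ∀ x, deriv (fun x => v x ^ 2) x = 2 * v x * deriv v x := fun x => by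
    have := ((hv.differentiable one_ne_zero x).hasDerivAt.pow 2).deriv
    simpa [Pi.pow_def] using this
  have i4 : IntervalIntegrable (fun x => deriv (fun x => v x ^ 2) x * ps x) volume al be := by
    simp_rw [hvd]
    exact (hm.intervalIntegrable).continuousOn_mul (by fun_prop)
  have i4' : IntervalIntegrable (fun x => -(deriv (fun x => v x ^ 2) x * ps x)) volume al be := i4.neg
  have i5 : IntervalIntegrable (fun x => deriv v x ^ 2 + -(deriv (fun x => v x ^ 2) x * ps x)) volume al be := i1.add i4'
  have hbp := by_parts hm hab hnu (F := fun x => v x ^ 2) (hv.pow 2) (by simp [va]) (by simp [vb])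
  have j1 : IntegrableOn (fun x => deriv v x ^ 2) (Ioc al be) := by
    rwa [intervalIntegrable_iff, uIoc_of_le hab] at i1
  have j3 : IntegrableOn (fun x => ps x ^ 2 * v x ^ 2) (Ioc al be) := by
    rwa [intervalIntegrable_iff, uIoc_of_le hab] at i3
  rw [← ofReal_integral_eq_lintegral_ofReal j1 (Eventually.of_forall fun x => sq_nonneg _),
    ← ofReal_integral_eq_lintegral_ofReal i2 (Eventually.of_forall fun x => sq_nonneg _),
    ← ofReal_integral_eq_lintegral_ofReal j3 (Eventually.of_forall fun x => by positivity), 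
    ← ENNReal.ofReal_add (integral_nonneg fun x => sq_nonneg _) (integral_nonneg fun x => sq_nonneg _),
    ← ENNReal.ofReal_add (add_nonneg (integral_nonneg fun x => sq_nonneg _) (integral_nonneg fun x => sq_nonneg _))
      (integral_nonneg fun x => by positivity), hbp, ← intervalIntegral.integral_of_le hab,
      ← intervalIntegral.integral_of_le hab, ← intervalIntegral.integral_neg, ← intervalIntegral.integral_add i1 i4',
      ← intervalIntegral.integral_add i5 i3]
  congr 1
  apply intervalIntegral.integral_congr
  intro x _
  simp only [hvd]
  ring

lemma compact_ineq {psi : ℝ → ℝ} {D ε R : ℝ} (hD : D ≤ π/2) (hR0 : 0 < R) (hRD : R < D) (hmo : MonotoneOn psi (Ioo (-D) D)) 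
    (hε0 : 0 ≤ ε) (hε1 : ε ≤ 1/100)
    (gA : ∀ x ∈ Ioo (-D) D, ∀ y ∈ Ioo (-D) D, x < y → 2 * tan ((y-x)/2) ≤ psi y - psi x)
    (gB : ∀ x ∈ Ioo (-D) D, ∀ y ∈ Ioo (-D) D, 1.2 ≤ y - x → 2 * tan ((y-x)/2) + 20 * ε ≤ psi y - psi x)
    {nu : Measure ℝ} (hnu : ∀ x ∈ Ioo (-D) D, ∀ y ∈ Ioo (-D) D, x ≤ y → nu (Ioc x y) = ENNReal.ofReal (psi y - psi x))
    {v : ℝ → ℝ} (hv : ContDiff ℝ 1 v) (hv0 : ∀ x, x ∉ Ioo (-R) R → v x = 0) :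
    ENNReal.ofReal (3 + ε/100) * (∫⁻ x in Ioo (-D) D, ENNReal.ofReal (v x ^ 2)) ≤ 
    (∫⁻ x in Ioo (-D) D, ENNReal.ofReal (deriv v x ^ 2)) + (∫⁻ x in Ioo (-D) D, ENNReal.ofReal (v x ^ 2) ∂nu)
      + (∫⁻ x in Ioo (-D) D, ENNReal.ofReal (psi x ^ 2 * v x ^ 2)) := by
  set R1 := (R + D)/2 with hR1
  set c : ℝ → ℝ := fun x => max (-R1) (min R1 x) with hc
  have hcm : ∀ x, c x ∈ Icc (-R1) R1 := fun x => ⟨le_max_left _ _, max_le (by linarith) (min_le_left _ _)⟩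
  have hsub : Icc (-R1) R1 ⊆ Ioo (-D) D := fun x hx => ⟨by linarith [hx.1], by linarith [hx.2]⟩
  have hcid : ∀ x ∈ Icc (-R1) R1, c x = x := fun x hx => by
    simp only [hc]; rw [min_eq_right hx.2, max_eq_right hx.1]
  have hcmono : Monotone c := fun x y hxy => max_le_max le_rfl (min_le_min le_rfl hxy)
  set ps : ℝ → ℝ := fun x => psi (c x) with hps
  have hpm : Monotone ps := fun x y hxy => hmo (hsub (hcm x)) (hsub (hcm y)) (hcmono hxy)
  have hpeq : ∀ x ∈ Icc (-R1) R1, ps x = psi x := fun x hx => by simp only [hps, hcid x hx]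
  have hsub2 : Icc (-R) R ⊆ Icc (-R1) R1 := Icc_subset_Icc (by linarith) (by linarith)
  have vb : v R = 0 := hv0 R (by simp)
  have va : v (-R) = 0 := hv0 (-R) (by simp)
  have hst := steklov_ineq hpm (al := -R1) (be := R1) hε0 hε1 (by linarith)
    (fun x hx y hy hxy => by rw [hpeq x hx, hpeq y hy]; exact gA x (hsub hx) y (hsub hy) hxy)
    (fun x hx y hy hxy => by rw [hpeq x hx, hpeq y hy]; exact gB x (hsub hx) y (hsub hy) hxy)
    (a' := -R) (b' := R) (by linarith) (by linarith) (by linarith) hv va vb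
  have hmR : -R ∈ Icc (-R) R := ⟨le_rfl, by linarith⟩
  have hen := energy_eq hpm (nu := nu) (al := -R) (be := R) (by linarith) (fun y hy => by
    rw [hpeq y (hsub2 hy), hpeq (-R) (hsub2 hmR)]
    exact hnu _ (hsub (hsub2 hmR)) _ (hsub (hsub2 hy)) hy.1) hv va vb
  have hIoc : Ioc (-R) R ⊆ Ioo (-D) D := fun x hx => ⟨by linarith [hx.1], by linarith [hx.2]⟩
  have hL : (∫⁻ x in Ioo (-D) D, ENNReal.ofReal (v x ^ 2)) ≤ ENNReal.ofReal (∫ x in (-R)..R, v x ^ 2) := by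
    have hvi : IntegrableOn (fun x => v x ^ 2) (Ioc (-R) R) :=
      ((hv.continuous.pow 2).integrableOn_Icc).mono_set Ioc_subset_Icc_self
    rw [intervalIntegral.integral_of_le (by linarith), ofReal_integral_eq_lintegral_ofReal hvi (Eventually.of_forall fun x => sq_nonneg _),
      ← lintegral_indicator measurableSet_Ioo, ← lintegral_indicator measurableSet_Ioc]
    refine lintegral_mono fun x => ?_
    by_cases hx : x ∈ Ioo (-R) R
    · rw [indicator_of_mem (Ioo_subset_Ioc_self hx), indicator_of_mem (hIoc (Ioo_subset_Ioc_self hx))]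
    · simp only [indicator, hv0 x hx]
      simp
  calc _ ≤ ENNReal.ofReal (3 + ε/100) * ENNReal.ofReal (∫ x in (-R)..R, v x ^ 2) := by gcongr
    _ = ENNReal.ofReal ((3 + ε/100) * ∫ x in (-R)..R, v x ^ 2) := (ENNReal.ofReal_mul (by positivity)).symm
    _ ≤ _ := ENNReal.ofReal_le_ofReal hst
    _ = _ := hen.symm
    _ ≤ _ := by
      gcongr ?_ + ?_ + ?_
      · exact lintegral_mono_set hIoc
      · exact lintegral_mono_set hIoc
      · refine le_trans (le_of_eq ?_) (lintegral_mono_set hIoc)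
        refine setLIntegral_congr_fun measurableSet_Ioc fun x hx => ?_
        simp only [hpeq x (hsub2 ⟨hx.1.le, hx.2⟩)]

def thk (η r : ℝ) : ℝ := max 0 (min 1 (|r|/η - 1))
def thf (η s : ℝ) : ℝ := ∫ r in (0:ℝ)..s, thk η r

lemma thk_cont (η : ℝ) : Continuous (thk η) := by unfold thk; fun_prop
lemma thk_nonneg (η r : ℝ) : 0 ≤ thk η r := le_max_left _ _
lemma thk_le (η r : ℝ) : thk η r ≤ 1 := max_le zero_le_one (min_le_left _ _)

lemma thf_deriv (η s : ℝ) : HasDerivAt (thf η) (thk η s) s :=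
  intervalIntegral.integral_hasDerivAt_right ((thk_cont η).intervalIntegrable _ _) 
    ((thk_cont η).stronglyMeasurableAtFilter _ _) (thk_cont η).continuousAt

lemma thf_contDiff (η : ℝ) : ContDiff ℝ 1 (thf η) := by
  rw [contDiff_one_iff_deriv]
  refine ⟨fun s => (thf_deriv η s).differentiableAt, ?_⟩
  have : deriv (thf η) = thk η := funext fun s => (thf_deriv η s).deriv
  rw [this]; exact thk_cont η

lemma thf_abs (η s : ℝ) : |thf η s| ≤ |s| := by
  have := intervalIntegral.norm_integral_le_of_norm_le_const (a := 0) (b := s) (C := 1) (f := thk η) (fun r _ => by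
    rw [Real.norm_eq_abs, abs_of_nonneg (thk_nonneg η r)]; exact thk_le η r)
  simpa [thf] using this

lemma thf_zero {η s : ℝ} (hη : 0 < η) (hs : |s| ≤ η) : thf η s = 0 := by
  unfold thf
  rw [intervalIntegral.integral_congr (g := fun _ => (0:ℝ))]
  · simp
  intro r hr
  have h1 : |r| ≤ |s| := by simpa using abs_sub_left_of_mem_uIcc hr
  have h2 : |r| / η ≤ 1 := by rw [div_le_one hη]; linarith
  simp only [thk]
  apply max_eq_left
  exact (min_le_right _ _).trans (by linarith)

lemma thf_tendsto (s : ℝ) : Tendsto (fun n : ℕ => thf (1/((n:ℝ)+1)) s) atTop (nhds s) := by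
  have : Tendsto (fun n : ℕ => thf (1/((n:ℝ)+1)) s) atTop (nhds (∫ r in (0:ℝ)..s, (1:ℝ))) := by
    unfold thf
    refine intervalIntegral.tendsto_integral_filter_of_dominated_convergence (fun _ => (1:ℝ)) ?_ ?_ (by simp) ?_
    · exact Eventually.of_forall fun n => (thk_cont _).aestronglyMeasurable
    · refine Eventually.of_forall fun n => Eventually.of_forall fun r _ => ?_
      rw [Real.norm_eq_abs, abs_of_nonneg (thk_nonneg _ r)]; exact thk_le _ r
    · have h0 : ∀ᵐ r : ℝ, r ≠ 0 := by
        have := (countable_singleton (0:ℝ)).ae_notMem volume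
        simpa using this
      filter_upwards [h0] with r hr _
      have hr' : 0 < |r| := abs_pos.2 hr
      refine tendsto_const_nhds.congr' ?_
      obtain ⟨N, hN⟩ := exists_nat_gt (2/|r|)
      filter_upwards [eventually_ge_atTop N] with n hn
      have hn' : 2 / |r| < (n:ℝ) + 1 := by
        have : (N:ℝ) ≤ n := by exact_mod_cast hn
        linarith
      rw [div_lt_iff₀ hr'] at hn'
      simp only [thk]
      rw [min_eq_left, max_eq_right zero_le_one]
      rw [div_div_eq_mul_div, div_one]
      linarith
  simpa using this

lemma trunc_ineq {psi : ℝ → ℝ} {D ε : ℝ} (hD0 : 0 < D) (hD : D ≤ π/2) (hmo : MonotoneOn psi (Ioo (-D) D)) 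
    (hε0 : 0 ≤ ε) (hε1 : ε ≤ 1/100)
    (gA : ∀ x ∈ Ioo (-D) D, ∀ y ∈ Ioo (-D) D, x < y → 2 * tan ((y-x)/2) ≤ psi y - psi x)
    (gB : ∀ x ∈ Ioo (-D) D, ∀ y ∈ Ioo (-D) D, 1.2 ≤ y - x → 2 * tan ((y-x)/2) + 20 * ε ≤ psi y - psi x)
    {nu : Measure ℝ} (hnu : ∀ x ∈ Ioo (-D) D, ∀ y ∈ Ioo (-D) D, x ≤ y → nu (Ioc x y) = ENNReal.ofReal (psi y - psi x))
    {v : ℝ → ℝ} (hv : ContDiff ℝ 1 v) (hv0 : ∀ x, x ∉ Ioo (-D) D → v x = 0) :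
    ENNReal.ofReal (3 + ε/100) * (∫⁻ x in Ioo (-D) D, ENNReal.ofReal (v x ^ 2)) ≤ 
    (∫⁻ x in Ioo (-D) D, ENNReal.ofReal (deriv v x ^ 2)) + (∫⁻ x in Ioo (-D) D, ENNReal.ofReal (v x ^ 2) ∂nu)
      + (∫⁻ x in Ioo (-D) D, ENNReal.ofReal (psi x ^ 2 * v x ^ 2)) := by
  have hvc := hv.continuous
  have hn : ∀ n : ℕ, ENNReal.ofReal (3 + ε/100) * (∫⁻ x in Ioo (-D) D, ENNReal.ofReal (thf (1/((n:ℝ)+1)) (v x) ^ 2)) ≤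
      (∫⁻ x in Ioo (-D) D, ENNReal.ofReal (deriv v x ^ 2)) + (∫⁻ x in Ioo (-D) D, ENNReal.ofReal (v x ^ 2) ∂nu)
      + (∫⁻ x in Ioo (-D) D, ENNReal.ofReal (psi x ^ 2 * v x ^ 2)) := by
    intro n
    set η : ℝ := 1/((n:ℝ)+1) with hη
    have hη0 : 0 < η := by positivity
    have hD1 : v D = 0 := hv0 D (by simp)
    have hD2 : v (-D) = 0 := hv0 (-D) (by simp)
    obtain ⟨d1, hd1, hd1'⟩ := Metric.continuousAt_iff.1 (hvc.continuousAt (x := D)) η hη0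
    obtain ⟨d2, hd2, hd2'⟩ := Metric.continuousAt_iff.1 (hvc.continuousAt (x := -D)) η hη0
    simp only [Real.dist_eq, hD1, hD2, sub_zero] at hd1' hd2'
    set dl := min (D/2) (min (d1/2) (d2/2)) with hdl
    have hl0 : 0 < dl := by positivity
    have hl1 : dl ≤ D/2 := min_le_left _ _
    have hl2 : dl ≤ d1/2 := (min_le_right _ _).trans (min_le_left _ _)
    have hl3 : dl ≤ d2/2 := (min_le_right _ _).trans (min_le_right _ _)
    have hz : ∀ x, x ∉ Ioo (-(D-dl)) (D-dl) → thf η (v x) = 0 := by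
      intro x hx
      apply thf_zero hη0
      by_cases hxD : x ∈ Ioo (-D) D
      · simp only [mem_Ioo, not_and_or, not_lt] at hx
        rcases hx with h | h
        · refine (hd2' ?_).le
          rw [abs_lt]; constructor <;> linarith [hxD.1]
        · refine (hd1' ?_).le
          rw [abs_lt]; constructor <;> linarith [hxD.2]
      · rw [hv0 x hxD]; simpa using hη0.le
    have hvn : ContDiff ℝ 1 (fun x => thf η (v x)) := (thf_contDiff η).comp hv
    have hdn : ∀ x, deriv (fun x => thf η (v x)) x = thk η (v x) * deriv v x := fun x =>
      ((thf_deriv η (v x)).comp x (hv.differentiable one_ne_zero x).hasDerivAt).deriv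
    have hsq : ∀ x, thf η (v x) ^ 2 ≤ v x ^ 2 := fun x => sq_le_sq.2 (thf_abs η (v x))
    refine (compact_ineq hD (by linarith : 0 < D - dl) (by linarith) hmo hε0 hε1 gA gB hnu hvn hz).trans ?_
    refine add_le_add (add_le_add (lintegral_mono fun x => ENNReal.ofReal_le_ofReal ?_)
      (lintegral_mono fun x => ENNReal.ofReal_le_ofReal (hsq x))) (lintegral_mono fun x => ENNReal.ofReal_le_ofReal
        (mul_le_mul_of_nonneg_left (hsq x) (sq_nonneg _)))
    · rw [hdn, sq_le_sq, abs_mul, abs_of_nonneg (thk_nonneg _ _)]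
      exact mul_le_of_le_one_left (abs_nonneg _) (thk_le _ _)
  have hlim : Tendsto (fun n : ℕ => ENNReal.ofReal (3 + ε/100) * (∫⁻ x in Ioo (-D) D, ENNReal.ofReal (thf (1/((n:ℝ)+1)) (v x) ^ 2)))
      atTop (nhds (ENNReal.ofReal (3 + ε/100) * (∫⁻ x in Ioo (-D) D, ENNReal.ofReal (v x ^ 2)))) := by
    refine ENNReal.Tendsto.const_mul ?_ (Or.inr ENNReal.ofReal_ne_top)
    refine tendsto_lintegral_of_dominated_convergence (fun x => ENNReal.ofReal (v x ^ 2)) ?_ ?_ ?_ ?_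
    · intro n
      have := (thf_contDiff (1/((n:ℝ)+1))).continuous
      exact (Continuous.measurable (by fun_prop)).ennreal_ofReal
    · intro n
      exact Eventually.of_forall fun x => ENNReal.ofReal_le_ofReal (sq_le_sq.2 (thf_abs _ (v x)))
    · exact (Integrable.lintegral_lt_top (((hvc.pow 2).integrableOn_Icc).mono_set Ioo_subset_Icc_self)).ne
    · refine Eventually.of_forall fun x => ?_
      exact (ENNReal.continuous_ofReal.tendsto _).comp ((thf_tendsto (v x)).pow 2)
  exact le_of_tendsto hlim (Eventually.of_forall hn)

lemma zero_of_lintegral {v : ℝ → ℝ} (hvc : Continuous v) {S : Set ℝ} {a b : ℝ} (hS : Ioo a b ⊆ S)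
    (h0 : (∫⁻ x in S, ENNReal.ofReal (v x ^ 2)) = 0) {x : ℝ} (hab : a < b) (hx : x ∈ Icc a b) : v x = 0 := by
  have h1 : (∫⁻ x in Ioo a b, ENNReal.ofReal (v x ^ 2)) = 0 :=
    le_antisymm ((lintegral_mono_set hS).trans h0.le) zero_le
  rw [lintegral_eq_zero_iff (by fun_prop)] at h1
  have h2 := (ae_restrict_iff' measurableSet_Ioo).1 h1
  have hU : IsOpen ({x | v x ≠ 0} ∩ Ioo a b) := (isOpen_ne_fun hvc continuous_const).inter isOpen_Ioo
  have hU0 : volume ({x | v x ≠ 0} ∩ Ioo a b) = 0 := by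
    refine measure_mono_null ?_ (ae_iff.1 h2)
    intro y hy
    have hy1 : v y ≠ 0 := hy.1
    have : 0 < v y ^ 2 := by positivity
    simp [hy.2.1, hy.2.2, hy1]
  rw [hU.measure_eq_zero_iff volume] at hU0
  have hcl : closure (Ioo a b) ⊆ {x | v x = 0} := by
    refine closure_minimal (fun y hy => ?_) (isClosed_eq hvc continuous_const)
    by_contra hne
    have : y ∈ ({x | v x ≠ 0} ∩ Ioo a b) := ⟨hne, hy⟩
    rw [hU0] at this
    exact this
  rw [closure_Ioo hab.ne] at hcl
  exact hcl hx

lemma lam1_bound (P : PsiA) {d ε : ℝ} (hd0 : 0 < d) (hd : d ≤ π) (hdom : P.dom = Ioo (-(d/2)) (d/2))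
    (hε0 : 0 ≤ ε) (hε1 : ε ≤ 1/100) 
    (gB : ∀ x ∈ Ioo (-(d/2)) (d/2), ∀ y ∈ Ioo (-(d/2)) (d/2), 1.2 ≤ y - x → 2 * tan ((y-x)/2) + 20 * ε ≤ P.psi y - P.psi x) :
    ENNReal.ofReal (3 + ε/100) ≤ lam1 (-(π/2)) (π/2) P.qM := by
  unfold lam1
  refine le_iInf₂ ?_
  rintro v ⟨⟨hv, hv0⟩, hne⟩
  have hvc := hv.continuous
  have hfin : (∫⁻ x in Ioo (-(π/2)) (π/2), ENNReal.ofReal (v x ^ 2)) ≠ ∞ :=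
    (Integrable.lintegral_lt_top (((hvc.pow 2).integrableOn_Icc).mono_set Ioo_subset_Icc_self)).ne
  unfold dirRQ
  rw [ENNReal.le_div_iff_mul_le (Or.inl hne) (Or.inl hfin)]
  have hsub : Ioo (-(d/2)) (d/2) ⊆ Ioo (-(π/2)) (π/2) := Ioo_subset_Ioo (by linarith) (by linarith)
  have hms := hvc.measurable.pow_const 2
  have hmo : MonotoneOn P.psi (Ioo (-(d/2)) (d/2)) := hdom ▸ P.mono
  have hq : (∫⁻ x in Ioo (-(π/2)) (π/2), ENNReal.ofReal (v x ^ 2) ∂P.qM) = 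
      (∫⁻ x in Ioo (-(d/2)) (d/2), ENNReal.ofReal (v x ^ 2) ∂P.nu) + 
      (∫⁻ x in Ioo (-(d/2)) (d/2), ENNReal.ofReal (P.psi x ^ 2 * v x ^ 2)) +
      ∞ * (∫⁻ x in Ioo (-(π/2)) (π/2) \ Ioo (-(d/2)) (d/2), ENNReal.ofReal (v x ^ 2)) := by
    rw [PsiA.qM, hdom, Measure.restrict_add, Measure.restrict_add, lintegral_add_measure, lintegral_add_measure,
      Measure.restrict_smul, lintegral_smul_measure, Measure.restrict_restrict measurableSet_Ioo,
      Measure.restrict_restrict measurableSet_Ioo, restrict_withDensity measurableSet_Ioo,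
      Measure.restrict_restrict measurableSet_Ioo, inter_eq_self_of_subset_right hsub,
      inter_eq_self_of_subset_right sdiff_subset]
    have hpm : AEMeasurable P.psi (volume.restrict (Ioo (-(d/2)) (d/2))) :=
      aemeasurable_restrict_of_monotoneOn measurableSet_Ioo hmo
    rw [lintegral_withDensity_eq_lintegral_mul₀ (hpm.pow_const 2).ennreal_ofReal hms.ennreal_ofReal.aemeasurable]
    congr 2
    refine lintegral_congr fun x => ?_
    simp only [Pi.mul_apply]
    rw [ENNReal.ofReal_mul (sq_nonneg _)]
  rw [hq]
  by_cases h0 : (∫⁻ x in Ioo (-(π/2)) (π/2) \ Ioo (-(d/2)) (d/2), ENNReal.ofReal (v x ^ 2)) = 0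
  · have hvz : ∀ x, x ∉ Ioo (-(d/2)) (d/2) → v x = 0 := by
      intro x hx
      by_cases hxp : x ∈ Ioo (-(π/2)) (π/2)
      · simp only [mem_Ioo, not_and_or, not_lt] at hx
        rcases hx with h | h
        · refine zero_of_lintegral hvc (a := -(π/2)) (b := -(d/2)) (fun y hy => ?_) h0 (by linarith [hxp.1]) ⟨hxp.1.le, h⟩
          refine ⟨⟨hy.1, by linarith [hy.2, pi_pos]⟩, fun hc => ?_⟩
          linarith [hc.1, hy.2]
        · refine zero_of_lintegral hvc (a := d/2) (b := π/2) (fun y hy => ?_) h0 (by linarith [hxp.2]) ⟨h, hxp.2.le⟩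
          refine ⟨⟨by linarith [hy.1, pi_pos], hy.2⟩, fun hc => ?_⟩
          linarith [hc.2, hy.1]
      · exact hv0 x hxp
    have hL : (∫⁻ x in Ioo (-(π/2)) (π/2), ENNReal.ofReal (v x ^ 2)) ≤ ∫⁻ x in Ioo (-(d/2)) (d/2), ENNReal.ofReal (v x ^ 2) := by
      rw [← lintegral_indicator measurableSet_Ioo, ← lintegral_indicator measurableSet_Ioo]
      refine lintegral_mono fun x => ?_
      by_cases hx : x ∈ Ioo (-(d/2)) (d/2)
      · rw [indicator_of_mem hx, indicator_of_mem (hsub hx)]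
      · simp only [indicator, hvz x hx]
        simp
    have key := trunc_ineq (D := d/2) (by linarith) (by linarith) hmo hε0 hε1 
      (fun x hx y hy hxy => P.gap (hdom ▸ hx) (hdom ▸ hy) hxy) gB
      (fun x hx y hy hxy => P.nu_eq (hdom ▸ hx) (hdom ▸ hy) hxy) hv hvz
    rw [h0, mul_zero, add_zero, ← add_assoc]
    calc _ ≤ _ := mul_le_mul_right hL _
      _ ≤ _ := key
      _ ≤ _ := by
        gcongr
  · rw [ENNReal.top_mul h0]
    simp

lemma log_concave {h : ℝ → ℝ} {m : ℕ} (hm : 0 < m) {I : Set ℝ} (hpos : ∀ x ∈ I, 0 < h x)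
    (hc : ConcaveOn ℝ I (fun x => h x ^ ((1 : ℝ) / m))) : ConcaveOn ℝ I (fun x => Real.log (h x)) := by
  have hm' : (0:ℝ) < m := by exact_mod_cast hm
  have e : ∀ x ∈ I, Real.log (h x) = m * Real.log (h x ^ ((1 : ℝ) / m)) := fun x hx => by
    rw [Real.log_rpow (hpos x hx)]
    field_simp
  refine ⟨hc.1, fun x hx y hy a b ha hb hab => ?_⟩
  have hz : a • x + b • y ∈ I := hc.1 hx hy ha hb hab
  have h1 := hc.2 hx hy ha hb hab
  have ux : 0 < h x ^ ((1 : ℝ) / m) := rpow_pos_of_pos (hpos x hx) _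
  have uy : 0 < h y ^ ((1 : ℝ) / m) := rpow_pos_of_pos (hpos y hy) _
  have h2 := strictConcaveOn_log_Ioi.concaveOn.2 (mem_Ioi.2 ux) (mem_Ioi.2 uy) ha hb hab
  have h3 : 0 < a • h x ^ ((1 : ℝ) / m) + b • h y ^ ((1 : ℝ) / m) := 
    (convex_Ioi (0:ℝ)) (mem_Ioi.2 ux) (mem_Ioi.2 uy) ha hb hab
  have h4 := Real.log_le_log h3 h1
  simp only [e x hx, e y hy, e _ hz]
  simp only [smul_eq_mul] at *
  have := mul_le_mul_of_nonneg_left (h2.trans h4) hm'.le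
  linarith

lemma exists_diff {G : ℝ → ℝ} {I : Set ℝ} (hI : IsOpen I) (hG : ConcaveOn ℝ I G) {u w : ℝ} (huw : u < w)
    (hsub : Ioo u w ⊆ I) : ∃ z ∈ Ioo u w, DifferentiableAt ℝ G z := by
  have hl := hG.locallyLipschitzOn hI
  have hz : (u+w)/2 ∈ Ioo u w := ⟨by linarith, by linarith⟩
  obtain ⟨C, t, ht, hC⟩ := hl (hsub hz)
  rw [hI.nhdsWithin_eq (hsub hz)] at ht
  have ht2 : t ∩ Ioo u w ∈ nhds ((u+w)/2) := inter_mem ht (isOpen_Ioo.mem_nhds hz)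
  have hU : IsOpen (interior (t ∩ Ioo u w)) := isOpen_interior
  have hUne : (interior (t ∩ Ioo u w)).Nonempty := ⟨_, mem_interior_iff_mem_nhds.2 ht2⟩
  have hLip := (hC.mono (interior_subset.trans inter_subset_left)).ae_differentiableWithinAt_of_mem_real (s := interior (t ∩ Ioo u w))
  have hpos : volume (interior (t ∩ Ioo u w)) ≠ 0 := (hU.measure_pos volume hUne).ne'
  by_contra hcon
  push Not at hcon
  apply hpos
  refine measure_mono_null ?_ (ae_iff.1 hLip)
  intro z hzU
  have hzt := (interior_subset hzU).2
  simp only [Classical.not_imp, Set.mem_ofPred_eq]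
  refine ⟨hzU, fun hd => hcon z hzt (hd.differentiableAt (hU.mem_nhds hzU))⟩

lemma deriv_anti {G : ℝ → ℝ} {I : Set ℝ} (hG : ConcaveOn ℝ I G) {x y : ℝ} (hx : x ∈ I) (hy : y ∈ I) (hxy : x ≤ y)
    (dx : DifferentiableAt ℝ G x) (dy : DifferentiableAt ℝ G y) : deriv G y ≤ deriv G x := by
  rcases hxy.lt_or_eq with h | h
  · exact (hG.deriv_le_slope hx hy h dy).trans (hG.slope_le_deriv hx hy h dx)
  · rw [h]

lemma affine_gain {h : ℝ → ℝ} {d a b : ℝ} {m : ℕ} (hm : 0 < m) (hd : d ≤ π)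
    (hab1 : Ioo (-(π / 8)) (π / 8) ⊆ Icc a b) (hab2 : Icc a b ⊆ Ioo (-(d / 2)) (d / 2))
    (hpos : ∀ x ∈ Ioo (-(d / 2)) (d / 2), 0 < h x)
    (hc : ConcaveOn ℝ (Ioo (-(d / 2)) (d / 2)) (fun x => h x ^ ((1 : ℝ) / m)))
    (haff : ∃ s t : ℝ, ∀ x ∈ Icc a b, h x = s * x + t) {x y : ℝ} (hx : x ∈ Ioo (-(d / 2)) (d / 2))
    (hy : y ∈ Ioo (-(d / 2)) (d / 2)) (hxy : 1.19 ≤ y - x) (dx : DifferentiableAt ℝ (fun y => Real.log (h y)) x)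
    (dy : DifferentiableAt ℝ (fun y => Real.log (h y)) y) :
    (1 - min (h a) (h b) / max (h a) (h b)) ^ 2 / (400 * π ^ 2) ≤ 
      (deriv (fun y => Real.log (h y)) x - deriv (fun y => Real.log (h y)) y) / 2 := by
  have hG := log_concave hm hpos hc
  obtain ⟨s, t, hst⟩ := haff
  have hpi := pi_lt_d4
  have hpi' := pi_gt_d4
  have h0 : (0:ℝ) ∈ Icc a b := hab1 ⟨by linarith, by linarith⟩
  have hab : a ≤ b := h0.1.trans h0.2
  have ha : a ∈ Icc a b := ⟨le_rfl, hab⟩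
  have hb : b ∈ Icc a b := ⟨hab, le_rfl⟩
  have hder : ∀ z ∈ Icc (-0.39:ℝ) 0.39, HasDerivAt (fun y => Real.log (h y)) (s / h z) z := by
    intro z hz
    have hz' : z ∈ Ioo (-(π / 8)) (π / 8) := ⟨by linarith [hz.1], by linarith [hz.2]⟩
    have h1 : HasDerivAt (fun y => s * y + t) s z := by
      simpa using ((hasDerivAt_id z).const_mul s).add_const t
    have h2 : HasDerivAt h s z := by
      refine h1.congr_of_eventuallyEq ?_
      filter_upwards [isOpen_Ioo.mem_nhds hz'] with y hy
      exact hst y (hab1 hy)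
    exact h2.log (hpos z (hab2 (hab1 hz'))).ne'
  set p := max x (-0.39) with hp
  set q := min y 0.39 with hq
  have hx1 := hx.1
  have hy2 := hy.2
  have hpq : p + 0.005 ≤ q := by
    rw [hp, hq, ← max_add_add_right]
    refine max_le (le_min ?_ ?_) (le_min ?_ ?_) <;> norm_num at * <;> linarith
  have hpI : p ∈ Icc (-0.39:ℝ) 0.39 := ⟨le_max_right _ _, by linarith [min_le_right y (0.39:ℝ)]⟩
  have hqI : q ∈ Icc (-0.39:ℝ) 0.39 := ⟨by linarith [le_max_right x (-0.39:ℝ)], min_le_right _ _⟩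
  have hsub : Icc (-0.39:ℝ) 0.39 ⊆ Icc a b := fun z hz => hab1 ⟨by linarith [hz.1], by linarith [hz.2]⟩
  have e1 := deriv_anti hG hx (hab2 (hsub hpI)) (le_max_left _ _) dx (hder p hpI).differentiableAt
  have e2 := deriv_anti hG (hab2 (hsub hqI)) hy (min_le_left _ _) (hder q hqI).differentiableAt dy
  rw [(hder p hpI).deriv] at e1
  rw [(hder q hqI).deriv] at e2
  set M := max (h a) (h b) with hM
  have hpa := hpos a (hab2 ha)
  have hpb := hpos b (hab2 hb)
  have hM0 : 0 < M := lt_max_of_lt_left hpa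
  have hle : ∀ z ∈ Icc a b, h z ≤ M := by
    intro z hz
    rcases le_total 0 s with hs | hs
    · refine le_trans ?_ (le_max_right _ _)
      rw [hst z hz, hst b hb]
      nlinarith [hz.2]
    · refine le_trans ?_ (le_max_left _ _)
      rw [hst z hz, hst a ha]
      nlinarith [hz.1]
  have hmm : (M - min (h a) (h b))^2 = s^2 * (b-a)^2 := by
    rw [hM, max_sub_min_eq_abs, sq_abs, hst a ha, hst b hb]
    ring
  have hba : b - a ≤ π := by
    have := (hab2 ha).1
    have := (hab2 hb).2
    linarith
  have hh1 := hpos p (hab2 (hsub hpI))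
  have hh2 := hpos q (hab2 (hsub hqI))
  have key : (1 - min (h a) (h b) / M) ^ 2 / (400 * π^2) ≤ (s / h p - s / h q) / 2 := by
    have f1 : s / h p - s / h q = s^2 * (q - p) / (h p * h q) := by
      rw [div_sub_div _ _ hh1.ne' hh2.ne', hst p (hsub hpI), hst q (hsub hqI)]
      ring
    have f2 : (1 - min (h a) (h b) / M) ^ 2 = s^2 * (b-a)^2 / M^2 := by
      rw [← hmm]
      field_simp
    have f3 : s^2 * 0.005 / (M * M) ≤ s^2 * (q - p) / (h p * h q) := by
      have hqp : 0 ≤ q - p := by linarith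
      gcongr
      · linarith
      · exact hle p (hsub hpI)
      · exact hle q (hsub hqI)
    have f4 : s^2 * (b-a)^2 / M^2 / (400 * π^2) ≤ s^2 * π^2 / M^2 / (400 * π^2) := by
      gcongr
    have f5 : s^2 * π^2 / M^2 / (400 * π^2) = s^2 * 0.005 / (M*M) / 2 := by
      field_simp
      ring
    rw [f1, f2]
    linarith
  linarith

lemma gap_gain {h : ℝ → ℝ} {d a b : ℝ} {m : ℕ} (hm : 0 < m) (hd : d ≤ π)
    (hab1 : Ioo (-(π / 8)) (π / 8) ⊆ Icc a b) (hab2 : Icc a b ⊆ Ioo (-(d / 2)) (d / 2))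
    (hpos : ∀ x ∈ Ioo (-(d / 2)) (d / 2), 0 < h x)
    (hc : ConcaveOn ℝ (Ioo (-(d / 2)) (d / 2)) (fun x => h x ^ ((1 : ℝ) / m)))
    (haff : ∃ s t : ℝ, ∀ x ∈ Icc a b, h x = s * x + t) (P Pf : PsiA)
    (hP : P.dom = Ioo (-(d / 2)) (d / 2)) (hPf : Pf.dom = Ioo (-(d / 2)) (d / 2))
    (hpsi : ∀ x ∈ Ioo (-(d / 2)) (d / 2),
                P.psi x = Pf.psi x + (-(deriv (fun y => Real.log (h y)) x)) / 2) :
    ∀ x ∈ Ioo (-(d/2)) (d/2), ∀ y ∈ Ioo (-(d/2)) (d/2), 1.2 ≤ y - x → 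
      2 * tan ((y-x)/2) + (1 - min (h a) (h b) / max (h a) (h b)) ^ 2 / (400 * π ^ 2) ≤ P.psi y - P.psi x := by
  intro x hx y hy hxy
  have hG := log_concave hm hpos hc
  set κ := (1 - min (h a) (h b) / max (h a) (h b)) ^ 2 / (400 * π ^ 2) with hκ
  have hxy3 : y - x < π := by linarith [hx.1, hy.2]
  have hev : ∀ δ ∈ Ioo (0:ℝ) 0.005, 2 * tan ((y-x)/2 - δ) + κ ≤ P.psi y - P.psi x := by
    intro δ hδ
    have hδ1 := hδ.1
    have hδ2 := hδ.2
    norm_num at hδ2 hxy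
    obtain ⟨x', hx', dx⟩ := exists_diff isOpen_Ioo hG (u := x) (w := x + δ) (by linarith) 
      (fun z hz => ⟨hx.1.trans hz.1, by linarith [hz.2, hy.2]⟩)
    obtain ⟨y', hy', dy⟩ := exists_diff isOpen_Ioo hG (u := y - δ) (w := y) (by linarith) 
      (fun z hz => ⟨by linarith [hz.1, hx.1], hz.2.trans hy.2⟩)
    have hxI : x' ∈ Ioo (-(d/2)) (d/2) := ⟨hx.1.trans hx'.1, by linarith [hx'.2, hy.2]⟩
    have hyI : y' ∈ Ioo (-(d/2)) (d/2) := ⟨by linarith [hy'.1, hx.1], hy'.2.trans hy.2⟩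
    have hx1 := hx'.1
    have hx2 := hx'.2
    have hy1 := hy'.1
    have hy2 := hy'.2
    have g1 := affine_gain hm hd hab1 hab2 hpos hc haff hxI hyI (by norm_num; linarith) dx dy
    have g2 : 2 * tan ((y'-x')/2) ≤ Pf.psi y' - Pf.psi x' := Pf.gap (hPf ▸ hxI) (hPf ▸ hyI) (by linarith)
    have g3 : P.psi x ≤ P.psi x' := P.mono (hP ▸ hx) (hP ▸ hxI) hx1.le
    have g4 : P.psi y' ≤ P.psi y := P.mono (hP ▸ hyI) (hP ▸ hy) hy2.le
    have g5 : tan ((y-x)/2 - δ) ≤ tan ((y'-x')/2) := by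
      refine strictMonoOn_tan.monotoneOn ⟨?_, ?_⟩ ⟨?_, ?_⟩ ?_ <;> linarith [pi_pos]
    rw [hpsi x' hxI] at g3
    rw [hpsi y' hyI] at g4
    linarith
  have hcos : cos ((y-x)/2) ≠ 0 := by
    refine (cos_pos_of_mem_Ioo ⟨?_, ?_⟩).ne'
    · norm_num at hxy; linarith [pi_pos]
    · linarith
  have hten : Tendsto (fun δ => 2 * tan ((y-x)/2 - δ) + κ) (nhdsWithin 0 (Ioi 0)) (nhds (2 * tan ((y-x)/2) + κ)) := by
    have h1 : ContinuousAt (fun δ : ℝ => tan ((y-x)/2 - δ)) 0 := by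
      refine ContinuousAt.comp (g := tan) (f := fun δ : ℝ => (y-x)/2 - δ) ?_ (by fun_prop)
      rw [sub_zero]
      exact continuousAt_tan.2 hcos
    have h2 := ((h1.tendsto.const_mul 2).add_const κ).mono_left (nhdsWithin_le_nhds (s := Ioi 0))
    simpa using h2
  refine le_of_tendsto hten ?_
  filter_upwards [Ioo_mem_nhdsGT (show (0:ℝ) < 0.005 by norm_num)] with δ hδ
  exact hev δ hδ

theorem refined_lower_bound_affine_profile :
    ∃ K : ℝ, 0 < K ∧
      ∀ d : ℝ, 0 < d → d ≤ π →
        ∀ m : ℕ, 0 < m →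
          ∀ (h : ℝ → ℝ) (a b : ℝ),
            Ioo (-(π / 8)) (π / 8) ⊆ Icc a b →
            Icc a b ⊆ Ioo (-(d / 2)) (d / 2) →
            (∀ x ∈ Ioo (-(d / 2)) (d / 2), 0 < h x) →
            ConcaveOn ℝ (Ioo (-(d / 2)) (d / 2)) (fun x => h x ^ ((1 : ℝ) / m)) →
            (∃ s t : ℝ, ∀ x ∈ Icc a b, h x = s * x + t) →
            ∀ P Pf : PsiA,
              P.dom = Ioo (-(d / 2)) (d / 2) →
              Pf.dom = Ioo (-(d / 2)) (d / 2) →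
              (∀ x ∈ Ioo (-(d / 2)) (d / 2),
                P.psi x = Pf.psi x + (-(deriv (fun y => Real.log (h y)) x)) / 2) →
              lam1 (-(π / 2)) (π / 2) P.qM ≤ 7 →
              3 + ENNReal.ofReal (8 * K / (m * π ^ 2) *
                  (1 - min (h a) (h b) / max (h a) (h b)) ^ 2) ≤
                lam1 (-(π / 2)) (π / 2) P.qM := by
  refine ⟨1/10000000, by norm_num, ?_⟩
  intro d hd0 hd m hm h a b hab1 hab2 hpos hc haff P Pf hP hPf hpsi _
  have hgain := gap_gain hm hd hab1 hab2 hpos hc haff P Pf hP hPf hpsi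
  have h0 : (0:ℝ) ∈ Icc a b := hab1 ⟨by linarith [pi_pos], by linarith [pi_pos]⟩
  have hpa := hpos a (hab2 ⟨le_rfl, h0.1.trans h0.2⟩)
  have hpb := hpos b (hab2 ⟨h0.1.trans h0.2, le_rfl⟩)
  set r := min (h a) (h b) / max (h a) (h b) with hr
  have hM0 : 0 < max (h a) (h b) := lt_max_of_lt_left hpa
  have hr0 : 0 ≤ r := div_nonneg (le_min hpa.le hpb.le) hM0.le
  have hr1 : r ≤ 1 := (div_le_one hM0).2 min_le_max
  have hS1 : (1 - r)^2 ≤ 1 := by nlinarith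
  have hpi9 : 9 ≤ π^2 := by nlinarith [pi_gt_three]
  have hm1 : (1:ℝ) ≤ m := by exact_mod_cast hm
  set ε := (1 - r)^2 / (8000 * π^2) with hε
  have hε0 : 0 ≤ ε := by positivity
  have hε1 : ε ≤ 1/100 := by
    rw [hε, div_le_iff₀ (by positivity)]
    linarith
  have hgB : 20 * ε = (1 - r)^2 / (400 * π^2) := by
    rw [hε]; field_simp; ring
  rw [← hgB] at hgain
  refine le_trans ?_ (lam1_bound P hd0 hd hP hε0 hε1 hgain)
  rw [ENNReal.ofReal_add (by norm_num) (by positivity), ENNReal.ofReal_ofNat]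
  gcongr
  have f1 : 8 * (1/10000000:ℝ) / (m * π^2) * (1-r)^2 ≤ 8 * (1/10000000:ℝ) / (1 * π^2) * (1-r)^2 := by
    gcongr
  refine f1.trans ?_
  have f2 : ε/100 = (1-r)^2/π^2 * (1/800000) := by rw [hε]; field_simp; ring
  have f3 : 8 * (1/10000000:ℝ) / (1 * π^2) * (1-r)^2 = (1-r)^2/π^2 * (8/10000000) := by
    field_simp
  have : 0 ≤ (1-r)^2/π^2 := by positivity
  rw [f2, f3]
  linarith
end
end

section
/- There exists an absolute constant C > 0 such that, for any ψ ∈ 𝒜(I_π) with finiteness domain I_d (d ≤ π), it holds λ₁(I_d, 2ψ²) ≥ 2 + C(π − d)³. -/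
open MeasureTheory Real Set Filter
open scoped ENNReal

noncomputable section

lemma aux_cmp {α β : Type*} [MeasurableSpace α] [MeasurableSpace β] (μ : Measure α)
    (ν : Measure β) (a : α → ℝ) (b : β → ℝ) (ha : ∀ x, 0 ≤ a x) (hb : ∀ x, 0 ≤ b x)
    (hma : AEMeasurable a μ) (hmb : AEMeasurable b ν)
    (h : ∀ τ : ℝ, 0 < τ → μ {x | τ < a x} ≤ ν {x | τ < b x}) :
    ∫⁻ x, ENNReal.ofReal (a x) ∂μ ≤ ∫⁻ x, ENNReal.ofReal (b x) ∂ν := by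
  rw [lintegral_eq_lintegral_meas_lt μ (Eventually.of_forall ha) hma,
    lintegral_eq_lintegral_meas_lt ν (Eventually.of_forall hb) hmb]
  exact setLIntegral_mono' measurableSet_Ioi fun τ hτ => h τ hτ

lemma aux_layer (μ : Measure ℝ) (p : ℝ → ℝ) (M : ℝ) (hM : 0 < M) (hp : ∀ x, 0 ≤ p x)
    (hpM : ∀ x, p x ≤ M) (hm : Measurable p) :
    ∫⁻ x, ENNReal.ofReal (p x) ∂μ = ∫⁻ t in Ioo 0 M, μ {x | t < p x} := by
  rw [lintegral_eq_lintegral_meas_lt μ (Eventually.of_forall hp) hm.aemeasurable]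
  have h1 : Ioi (0:ℝ) = Ioo 0 M ∪ Ici M := (Ioo_union_Ici_eq_Ioi hM).symm
  rw [h1, lintegral_union measurableSet_Ici]
  · have : ∫⁻ t in Ici M, μ {x | t < p x} = ∫⁻ t in Ici M, 0 := by
      refine setLIntegral_congr_fun measurableSet_Ici ?_
      intro t ht
      have : {x | t < p x} = ∅ := by
        ext x
        simp only [mem_ofPred_eq, mem_empty_iff_false, iff_false, not_lt]
        exact (hpM x).trans ht
      simp [this]
    rw [this]; simp
  · rw [Set.disjoint_left]
    intro x hx hx'
    exact absurd hx.2 (not_lt.2 hx')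

lemma aux_area (p p' : ℝ → ℝ) (hp : ∀ x, HasDerivAt p (p' x) x) (hp' : Measurable p')
    (hpm : Measurable p)
    (S : Set ℝ) (hS : MeasurableSet S) (M : ℝ) (hM : Ioo 0 M ⊆ p '' S)
    (g : ℝ → ℝ≥0∞) (hg : Measurable g) :
    ∫⁻ t in Ioo 0 M, g t ≤ ∫⁻ x in S, ENNReal.ofReal |p' x| * g (p x) := by
  have hm : Measurable fun x => ENNReal.ofReal |p' x| :=
    ENNReal.measurable_ofReal.comp (measurable_abs.comp hp')
  have hle : volume.restrict (Ioo 0 M) ≤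
      ((volume.restrict S).withDensity fun x => ENNReal.ofReal |p' x|).map p := by
    rw [Measure.le_iff]
    intro B hB
    rw [Measure.map_apply hpm hB, withDensity_apply _ (hpm hB), Measure.restrict_apply hB,
      Measure.restrict_restrict (hpm hB)]
    have := addHaar_image_le_lintegral_abs_det_fderiv volume (f := p) ((hpm hB).inter hS)
      (fun x _ => (hp x).hasFDerivAt.hasFDerivWithinAt)
    simp only [ContinuousLinearMap.det_toSpanSingleton] at this
    refine le_trans (measure_mono ?_) this
    rintro t ⟨htB, ht⟩
    obtain ⟨x, hx, rfl⟩ := hM ht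
    exact ⟨x, ⟨htB, hx⟩, rfl⟩
  calc ∫⁻ t in Ioo 0 M, g t ≤ _ := lintegral_mono' hle le_rfl
    _ = _ := by
      rw [lintegral_map hg hpm]
      exact lintegral_withDensity_eq_lintegral_mul _ hm (hg.comp hpm)

/-- rearrangement estimate for a monotone function of the distribution function -/
lemma aux_D (μ : Measure ℝ) [IsFiniteMeasure μ] (p : ℝ → ℝ) (hp : Continuous p) (s : ℝ → ℝ)
    (hs : ∀ t, s t = (μ {x | t < p x}).toReal / 2) (f : ℝ → ℝ) (hf : Monotone f)
    (hf0 : ∀ x, 0 ≤ f x) (t : ℝ) :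
    ∫⁻ x in {x | t < p x}, ENNReal.ofReal (f (s (p x)) ^ 2) ∂μ ≤
      2 * ∫⁻ u in Ioo 0 (s t), ENNReal.ofReal (f u ^ 2) := by
  have hsanti : Antitone s := by
    intro a b hab
    rw [hs, hs]
    gcongr
    exact measure_ne_top _ _
  have hU : MeasurableSet {x | t < p x} := measurableSet_lt measurable_const hp.measurable
  have hsm : Measurable fun x => f (s (p x)) ^ 2 :=
    ((hf.measurable.comp hsanti.measurable).comp hp.measurable).pow_const 2
  have hms : ∀ t, μ {x | t < p x} = ENNReal.ofReal (2 * s t) := by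
    intro t
    rw [hs, mul_div_cancel₀ _ (two_ne_zero), ENNReal.ofReal_toReal (measure_ne_top _ _)]
  have hs0 : ∀ t, 0 ≤ s t := fun t => by rw [hs]; positivity
  have key := aux_cmp (μ.restrict {x | t < p x})
    ((2 : ℝ≥0∞) • (volume.restrict (Ioo 0 (s t)))) (fun x => f (s (p x)) ^ 2) (fun u => f u ^ 2)
    (fun _ => sq_nonneg _) (fun _ => sq_nonneg _) hsm.aemeasurable
    (hf.measurable.pow_const 2).aemeasurable ?_
  · rwa [lintegral_smul_measure, smul_eq_mul] at key
  intro τ hτ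
  have hW : MeasurableSet {x | τ < f (s (p x)) ^ 2} := measurableSet_lt measurable_const hsm
  have hW2 : MeasurableSet {x | τ < f x ^ 2} :=
    measurableSet_lt measurable_const (hf.measurable.pow_const 2)
  rw [Measure.restrict_apply hW, Measure.smul_apply, Measure.restrict_apply hW2, smul_eq_mul,
    (hW.inter hU).measure_eq_iSup_isCompact]
  refine iSup₂_le fun K hKW => iSup_le fun hK => ?_
  rcases K.eq_empty_or_nonempty with rfl | hne
  · simp
  obtain ⟨x₀, hx₀, hmax⟩ := hK.exists_isMaxOn hne hp.continuousOn
  have hx₀W := hKW hx₀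
  have h1 : μ K + μ {x | p x₀ < p x} ≤ μ {x | t < p x} := by
    rw [← measure_union _ (measurableSet_lt measurable_const hp.measurable)]
    · apply measure_mono
      rintro x (hx | hx)
      · exact (hKW hx).2
      · have e1 : t < p x₀ := by simpa using hx₀W.2
        have e2 : p x₀ < p x := by simpa using hx
        simpa using lt_trans e1 e2
    · rw [Set.disjoint_left]
      intro x hx hx'
      have e1 : p x ≤ p x₀ := by simpa using hmax hx
      have e2 : p x₀ < p x := by simpa using hx'
      linarith
  rw [hms, hms] at h1
  have h2 : μ K ≤ ENNReal.ofReal (2 * s t) - ENNReal.ofReal (2 * s (p x₀)) :=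
    ENNReal.le_sub_of_add_le_right ENNReal.ofReal_ne_top h1
  rw [← ENNReal.ofReal_sub _ (by have := hs0 (p x₀); positivity)] at h2
  refine h2.trans ?_
  have h3 : ENNReal.ofReal (s t - s (p x₀)) ≤ volume ({x | τ < f x ^ 2} ∩ Ioo 0 (s t)) := by
    rw [← Real.volume_Ioo]
    apply measure_mono
    intro u hu
    refine ⟨?_, (hs0 _).trans_lt hu.1, hu.2⟩
    have e1 : τ < f (s (p x₀)) ^ 2 := by simpa using hx₀W.1
    simp only [mem_ofPred_eq]
    refine lt_of_lt_of_le e1 ?_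
    exact pow_le_pow_left₀ (hf0 _) (hf hu.1.le) 2
  calc _ = 2 * ENNReal.ofReal (s t - s (p x₀)) := by
        rw [← mul_sub, ENNReal.ofReal_mul (by norm_num)]; simp
    _ ≤ _ := by gcongr

lemma aux_B (P : PsiA) (U : Set ℝ) (hU : MeasurableSet U)
    (hdm : MeasurableSet P.dom) (s : ℝ) (hs : s ≤ π / 2)
    (hsU : volume (U ∩ P.dom) = ENNReal.ofReal (2 * s)) :
    2 * ∫⁻ u in Ioo 0 s, ENNReal.ofReal (tan u ^ 2) ≤
      ∫⁻ x in U, ENNReal.ofReal (P.psi x ^ 2) ∂(volume.restrict P.dom) := by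
  have hmeas : AEMeasurable P.psi (volume.restrict P.dom) :=
    aemeasurable_restrict_of_monotoneOn hdm P.mono
  have htan : Measurable tan := by
    have : tan = fun x => sin x / cos x := by ext x; exact tan_eq_sin_div_cos x
    rw [this]; exact measurable_sin.div measurable_cos
  have key := aux_cmp ((2 : ℝ≥0∞) • (volume.restrict (Ioo 0 s)))
    ((volume.restrict P.dom).restrict U) (fun u => tan u ^ 2) (fun x => P.psi x ^ 2)
    (fun _ => sq_nonneg _) (fun _ => sq_nonneg _) (htan.pow_const 2).aemeasurable
    (hmeas.restrict.pow_const 2) ?_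
  · rwa [lintegral_smul_measure, smul_eq_mul] at key
  intro τ hτ
  have hW : MeasurableSet {x | τ < tan x ^ 2} :=
    measurableSet_lt measurable_const (htan.pow_const 2)
  rw [Measure.smul_apply, Measure.restrict_apply hW, smul_eq_mul, Measure.restrict_restrict hU]
  set A := arctan (√τ) with hA
  have hA0 : 0 ≤ A := by rw [hA, arctan_nonneg]; positivity
  have h1 : volume ({x | τ < tan x ^ 2} ∩ Ioo 0 s) ≤ ENNReal.ofReal (s - A) := by
    rw [← Real.volume_Ioo]
    apply measure_mono
    rintro u ⟨hu, hu0, hus⟩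
    refine ⟨?_, hus⟩
    have ht0 : 0 ≤ tan u := tan_nonneg_of_nonneg_of_le_pi_div_two hu0.le (by linarith)
    have : √τ < tan u := (Real.sqrt_lt' (lt_of_le_of_ne ht0 (by
      rintro h; simp only [mem_ofPred_eq, ← h] at hu; norm_num at hu; linarith))).2 hu
    rw [hA, ← arctan_tan (x := u) (by linarith) (by linarith)]
    exact arctan_strictMono this
  have h2 : volume (P.dom ∩ {x | P.psi x ^ 2 ≤ τ}) ≤ ENNReal.ofReal (2 * A) := by
    refine (Real.volume_le_diam _).trans ?_
    refine Metric.ediam_le ?_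
    have aux : ∀ x ∈ P.dom ∩ {x | P.psi x ^ 2 ≤ τ}, ∀ y ∈ P.dom ∩ {x | P.psi x ^ 2 ≤ τ},
        x < y → y - x ≤ 2 * A := by
      rintro x ⟨hx, hx'⟩ y ⟨hy, hy'⟩ hxy
      have hg := P.gap hx hy hxy
      have e1 := abs_le.1 (Real.abs_le_sqrt hx')
      have e2 := abs_le.1 (Real.abs_le_sqrt hy')
      have b1 := P.domSub hx
      have b2 := P.domSub hy
      have : tan ((y - x) / 2) ≤ √τ := by linarith
      have := arctan_strictMono.monotone this
      rw [arctan_tan (by linarith [b1.2, b2.1, b1.1, b2.2, pi_pos]) (by linarith [b1.2, b2.1, b1.1, b2.2])] at this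
      linarith
    intro x hx y hy
    rw [edist_dist, Real.dist_eq]
    apply ENNReal.ofReal_le_ofReal
    rcases lt_trichotomy x y with h | h | h
    · rw [abs_sub_comm, abs_of_pos (by linarith)]; exact aux x hx y hy h
    · subst h; simp; exact hA0
    · rw [abs_of_pos (by linarith)]; exact aux y hy x hx h
  have h3 : ENNReal.ofReal (2 * s) ≤
      (volume.restrict (U ∩ P.dom)) {x | τ < P.psi x ^ 2} + ENNReal.ofReal (2 * A) := by
    rw [← hsU]
    calc volume (U ∩ P.dom) = (volume.restrict (U ∩ P.dom)) univ := by simp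
      _ ≤ (volume.restrict (U ∩ P.dom)) ({x | τ < P.psi x ^ 2} ∪ {x | P.psi x ^ 2 ≤ τ}) := by
        apply measure_mono
        intro x _
        exact lt_or_ge τ (P.psi x ^ 2)
      _ ≤ _ := measure_union_le _ _
      _ ≤ _ := by
        gcongr
        refine le_trans ?_ h2
        rw [Measure.restrict_apply' (hU.inter hdm)]
        apply measure_mono
        rintro x ⟨hx, hx'⟩
        exact ⟨hx'.2, hx⟩
  have h4 := tsub_le_iff_right.2 h3
  rw [← ENNReal.ofReal_sub _ (by positivity)] at h4
  refine le_trans ?_ h4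
  calc _ ≤ 2 * ENNReal.ofReal (s - A) := by gcongr
    _ = _ := by rw [← mul_sub, ENNReal.ofReal_mul (by norm_num)]; simp

lemma aux_point (b lam : ℝ) (hlam : 0 ≤ lam) (f f' : ℝ → ℝ)
    (hd : ∀ u ∈ Icc 0 b, HasDerivAt f (f' u) u) (hc : ContinuousOn f' (Icc 0 b))
    (hf'0 : ∀ u ∈ Icc 0 b, 0 ≤ f' u) (hf0 : 0 ≤ f 0)
    (hpt : ∀ u ∈ Ioo 0 b, lam + f u ^ 2 ≤ f' u + 2 * tan u ^ 2) (s : ℝ) (hs : s ∈ Icc 0 b) :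
    ENNReal.ofReal lam * ENNReal.ofReal s + ∫⁻ u in Ioo 0 s, ENNReal.ofReal (f u ^ 2) ≤
      ENNReal.ofReal (f s) + 2 * ∫⁻ u in Ioo 0 s, ENNReal.ofReal (tan u ^ 2) := by
  have htan : Measurable tan := by
    have : tan = fun x => sin x / cos x := by ext x; exact tan_eq_sin_div_cos x
    rw [this]; exact measurable_sin.div measurable_cos
  have hsub : Icc 0 s ⊆ Icc 0 b := Icc_subset_Icc_right hs.2
  have h1 : ENNReal.ofReal lam * ENNReal.ofReal s = ∫⁻ u in Ioo 0 s, ENNReal.ofReal lam := by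
    rw [setLIntegral_const, Real.volume_Ioo, sub_zero]
  have hint : IntervalIntegrable f' volume 0 s :=
    ContinuousOn.intervalIntegrable (by rw [uIcc_of_le hs.1]; exact hc.mono hsub)
  have h2 : ∫⁻ u in Ioo 0 s, ENNReal.ofReal (f' u) ≤ ENNReal.ofReal (f s) := by
    have e1 : ∫ u in (0:ℝ)..s, f' u = f s - f 0 :=
      intervalIntegral.integral_eq_sub_of_hasDerivAt
        (fun u hu => hd u (hsub (by rwa [uIcc_of_le hs.1] at hu))) hint
    rw [intervalIntegral.integral_of_le hs.1] at e1
    have e2 := ofReal_integral_eq_lintegral_ofReal (μ := volume.restrict (Ioc 0 s)) (f := f')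
      ((intervalIntegrable_iff_integrableOn_Ioc_of_le hs.1).1 hint)
      ((ae_restrict_iff' measurableSet_Ioc).2 (Eventually.of_forall fun u hu =>
        hf'0 u (hsub (Ioc_subset_Icc_self hu))))
    calc _ ≤ ∫⁻ u in Ioc 0 s, ENNReal.ofReal (f' u) := lintegral_mono_set Ioo_subset_Ioc_self
      _ = ENNReal.ofReal (f s - f 0) := by rw [← e2, e1]
      _ ≤ _ := ENNReal.ofReal_le_ofReal (by linarith)
  rw [h1, ← lintegral_add_left measurable_const]
  have hmt : Measurable fun u => ENNReal.ofReal (tan u ^ 2) :=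
    ENNReal.measurable_ofReal.comp (htan.pow_const 2)
  calc _ ≤ ∫⁻ u in Ioo 0 s, (ENNReal.ofReal (f' u) + 2 * ENNReal.ofReal (tan u ^ 2)) := by
        refine setLIntegral_mono' measurableSet_Ioo fun u hu => ?_
        have hu' : u ∈ Ioo 0 b := ⟨hu.1, hu.2.trans_le hs.2⟩
        have e2 : (2 : ℝ≥0∞) = ENNReal.ofReal 2 := by simp
        rw [e2, ← ENNReal.ofReal_mul (by norm_num), ← ENNReal.ofReal_add hlam (sq_nonneg _),
          ← ENNReal.ofReal_add (hf'0 u (Ioo_subset_Icc_self hu')) (by positivity)]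
        exact ENNReal.ofReal_le_ofReal (hpt u hu')
    _ = (∫⁻ u in Ioo 0 s, ENNReal.ofReal (f' u)) +
        2 * ∫⁻ u in Ioo 0 s, ENNReal.ofReal (tan u ^ 2) := by
        rw [lintegral_add_right _ (hmt.const_mul 2), lintegral_const_mul _ hmt]
    _ ≤ _ := by gcongr

lemma aux_core (d : ℝ) (hd0 : 0 < d) (hdpi : d ≤ π) (P : PsiA)
    (hdom : P.dom = Ioo (-(d / 2)) (d / 2)) (lam : ℝ) (hlam : 0 ≤ lam) (f0 f' : ℝ → ℝ)
    (hd : ∀ u ∈ Icc 0 (d / 2), HasDerivAt f0 (f' u) u) (hc : ContinuousOn f' (Icc 0 (d / 2)))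
    (hf'0 : ∀ u ∈ Icc 0 (d / 2), 0 ≤ f' u) (hf0 : 0 ≤ f0 0)
    (hpt : ∀ u ∈ Ioo 0 (d / 2), lam + f0 u ^ 2 ≤ f' u + 2 * tan u ^ 2) :
    ENNReal.ofReal lam ≤ lam1 (-(π / 2)) (π / 2) ((2 : ℝ≥0∞) • P.sqM) := by
  have hb : 0 ≤ d / 2 := by positivity
  -- the clamped function
  obtain ⟨f, hfmono, hfnn, hfbd, hfeq⟩ : ∃ f : ℝ → ℝ, Monotone f ∧ (∀ u, 0 ≤ f u) ∧
      (∀ u, f u ≤ f0 (d / 2)) ∧ ∀ u ∈ Icc 0 (d / 2), f u = f0 u := by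
    have hm : MonotoneOn f0 (Icc 0 (d / 2)) := by
      apply monotoneOn_of_deriv_nonneg (convex_Icc _ _)
      · exact fun u hu => (hd u hu).continuousAt.continuousWithinAt
      · exact fun u hu => (hd u (interior_subset hu)).differentiableAt.differentiableWithinAt
      · intro u hu
        rw [(hd u (interior_subset hu)).deriv]
        exact hf'0 u (interior_subset hu)
    have hmem : ∀ u, max 0 (min u (d / 2)) ∈ Icc 0 (d / 2) :=
      fun u => ⟨le_max_left _ _, max_le hb (min_le_right _ _)⟩
    refine ⟨fun u => f0 (max 0 (min u (d / 2))), ?_, ?_, ?_, ?_⟩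
    · intro x y hxy
      exact hm (hmem x) (hmem y) (max_le_max le_rfl (min_le_min hxy le_rfl))
    · intro u
      exact hf0.trans (hm ⟨le_rfl, hb⟩ (hmem u) (hmem u).1)
    · intro u
      exact hm (hmem u) ⟨hb, le_rfl⟩ (hmem u).2
    · intro u hu
      simp only
      rw [min_eq_left hu.2, max_eq_right hu.1]
  have hpoint : ∀ s ∈ Icc 0 (d / 2),
      ENNReal.ofReal lam * ENNReal.ofReal s + ∫⁻ u in Ioo 0 s, ENNReal.ofReal (f u ^ 2) ≤
      ENNReal.ofReal (f s) + 2 * ∫⁻ u in Ioo 0 s, ENNReal.ofReal (tan u ^ 2) := by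
    intro s hs
    have := aux_point (d / 2) lam hlam f0 f' hd hc hf'0 hf0 hpt s hs
    rw [hfeq s hs]
    refine le_trans (le_of_eq ?_) this
    congr 1
    refine setLIntegral_congr_fun measurableSet_Ioo fun u hu => ?_
    rw [hfeq u ⟨hu.1.le, hu.2.le.trans hs.2⟩]
  unfold lam1
  refine le_iInf₂ fun v hv => ?_
  obtain ⟨⟨hvC, hv0⟩, hvne⟩ := hv
  unfold dirRQ
  set V := Ioo (-(π / 2)) (π / 2) with hV
  have hVm : MeasurableSet V := measurableSet_Ioo
  set p : ℝ → ℝ := fun x => v x ^ 2 with hp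
  have hvc : Continuous v := hvC.continuous
  have hpc : Continuous p := hvc.pow 2
  have hpm : Measurable p := hpc.measurable
  have hpnn : ∀ x, 0 ≤ p x := fun x => sq_nonneg _
  have hv'c : Continuous (deriv v) := hvC.continuous_deriv le_rfl
  -- the maximum
  obtain ⟨x₀, hx₀, hmax⟩ := (isCompact_Icc (a := -(π / 2)) (b := π / 2)).exists_isMaxOn
    (nonempty_Icc.2 (by linarith [pi_pos])) hpc.continuousOn
  set M := p x₀ with hM
  have hpM : ∀ x, p x ≤ M := by
    intro x
    by_cases hx : x ∈ Icc (-(π / 2)) (π / 2)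
    · simpa using hmax hx
    · have : v x = 0 := hv0 x (fun h => hx (Ioo_subset_Icc_self h))
      simp only [hp, this]
      simpa using hpnn x₀
  have hMpos : 0 < M := by
    by_contra hcon
    apply hvne
    have : ∀ x, v x ^ 2 = 0 := fun x => le_antisymm ((hpM x).trans (not_lt.1 hcon)) (hpnn x)
    simp [this]
  have hx₀V : x₀ ∈ V := by
    by_contra hcon
    have : v x₀ = 0 := hv0 x₀ hcon
    simp only [hM, hp, this] at hMpos
    norm_num at hMpos
  have hpl : p (-(π / 2)) = 0 := by
    have : v (-(π / 2)) = 0 := hv0 _ (by simp [hV])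
    simp [hp, this]
  have hpr : p (π / 2) = 0 := by
    have : v (π / 2) = 0 := hv0 _ (by simp [hV])
    simp [hp, this]
  set D := ∫⁻ x in V, ENNReal.ofReal (p x) with hD
  set N1 := ∫⁻ x in V, ENNReal.ofReal (deriv v x ^ 2) with hN1
  set N2 := ∫⁻ x in V, ENNReal.ofReal (p x) ∂((2 : ℝ≥0∞) • P.sqM) with hN2
  have hdm : MeasurableSet P.dom := by rw [hdom]; exact measurableSet_Ioo
  have hDtop : D ≠ ∞ := by
    have : D ≤ ∫⁻ x in V, ENNReal.ofReal M :=
      lintegral_mono fun x => ENNReal.ofReal_le_ofReal (hpM x)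
    refine ne_top_of_le_ne_top ?_ this
    rw [setLIntegral_const, hV, Real.volume_Ioo]
    exact ENNReal.mul_ne_top ENNReal.ofReal_ne_top ENNReal.ofReal_ne_top
  rw [ENNReal.le_div_iff_mul_le (Or.inl hvne) (Or.inl hDtop)]
  by_cases hout : ∫⁻ x in V \ P.dom, ENNReal.ofReal (p x) = 0
  swap
  · have : N2 = ∞ := by
      rw [eq_top_iff, hN2, Measure.restrict_smul, lintegral_smul_measure, PsiA.sqM,
        Measure.restrict_add, lintegral_add_measure, Measure.restrict_smul,
        lintegral_smul_measure, Measure.restrict_restrict hVm]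
      have e : V ∩ (V \ P.dom) = V \ P.dom := by ext x; simp
      rw [e]
      simp only [smul_eq_mul]
      rw [ENNReal.top_mul hout]
      simp
    rw [this]; simp
  have hdv : P.dom ⊆ V := P.domSub
  set μ := volume.restrict V with hμ
  have : IsFiniteMeasure μ := by rw [hμ, hV]; infer_instance
  obtain ⟨s, hs⟩ : ∃ s : ℝ → ℝ, ∀ t, s t = (μ {x | t < p x}).toReal / 2 := ⟨_, fun _ => rfl⟩
  have hsanti : Antitone s := by
    intro a b hab
    rw [hs, hs]
    gcongr
    exact measure_ne_top _ _
  have hms : ∀ t, μ {x | t < p x} = ENNReal.ofReal (2 * s t) := by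
    intro t
    rw [hs, mul_div_cancel₀ _ (two_ne_zero), ENNReal.ofReal_toReal (measure_ne_top _ _)]
  have hs0 : ∀ t, 0 ≤ s t := fun t => by rw [hs]; positivity
  have hUm : ∀ t, MeasurableSet {x | t < p x} := fun t =>
    measurableSet_lt measurable_const hpm
  have hUdom : ∀ t, 0 < t → volume ({x | t < p x} ∩ P.dom) = ENNReal.ofReal (2 * s t) := by
    intro t ht
    rw [← hms, hμ, Measure.restrict_apply (hUm t)]
    apply le_antisymm
    · exact measure_mono (inter_subset_inter_right _ hdv)
    · have hz : volume ({x | t < p x} ∩ (V \ P.dom)) = 0 := by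
        have hout' := (lintegral_eq_zero_iff (ENNReal.measurable_ofReal.comp hpm)).1 hout
        have := ae_iff.1 hout'
        rw [← Measure.restrict_apply (hUm t)]
        refine measure_mono_null ?_ this
        intro x hx
        have hx' : t < p x := by simpa using hx
        have : 0 < p x := ht.trans hx'
        simpa using this
      calc _ ≤ volume (({x | t < p x} ∩ P.dom) ∪ ({x | t < p x} ∩ (V \ P.dom))) := by
            apply measure_mono
            rintro x ⟨h1, h2⟩
            by_cases hxd : x ∈ P.dom
            · exact Or.inl ⟨h1, hxd⟩
            · exact Or.inr ⟨h1, h2, hxd⟩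
        _ ≤ _ := measure_union_le _ _
        _ = _ := by rw [hz, add_zero]
  have hsd : ∀ t, 0 < t → s t ∈ Icc 0 (d / 2) := by
    intro t ht
    refine ⟨hs0 t, ?_⟩
    have h1 : ENNReal.ofReal (2 * s t) ≤ ENNReal.ofReal d := by
      rw [← hUdom t ht]
      calc _ ≤ volume P.dom := measure_mono inter_subset_right
        _ = _ := by rw [hdom, Real.volume_Ioo]; congr 1; ring
    have := (ENNReal.ofReal_le_ofReal_iff hd0.le).1 h1
    linarith
  -- D
  have hDlayer : D = ∫⁻ t in Ioo 0 M, ENNReal.ofReal (2 * s t) := by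
    rw [hD, aux_layer μ p M hMpos hpnn hpM hpm]
    simp_rw [hms]
  -- potential
  have hN2low : ∫⁻ t in Ioo 0 M, 2 * (2 * ∫⁻ u in Ioo 0 (s t), ENNReal.ofReal (tan u ^ 2)) ≤ N2 := by
    rw [hN2, aux_layer _ p M hMpos hpnn hpM hpm]
    refine setLIntegral_mono' measurableSet_Ioo fun t ht => ?_
    rw [Measure.restrict_smul, Measure.smul_apply, smul_eq_mul]
    gcongr
    refine (aux_B P {x | t < p x} (hUm t) hdm (s t) ((hsd t ht.1).2.trans (by linarith))
      (hUdom t ht.1)).trans ?_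
    rw [PsiA.sqM, Measure.restrict_add, Measure.add_apply]
    refine le_trans ?_ (le_self_add)
    rw [Measure.restrict_apply (hUm t), withDensity_apply _ ((hUm t).inter hVm)]
    rw [Measure.restrict_restrict (hUm t), Measure.restrict_restrict ((hUm t).inter hVm)]
    apply lintegral_mono_set
    rintro x ⟨h1, h2⟩
    exact ⟨⟨h1, hdv h2⟩, h2⟩
  -- D part
  have hfs : Measurable fun t => f (s t) := hfmono.measurable.comp hsanti.measurable
  set Φ := ∫⁻ x, ENNReal.ofReal (f (s (p x)) ^ 2) * ENNReal.ofReal (p x) ∂μ with hΦ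
  set F := ∫⁻ t in Ioo 0 M, 2 * ∫⁻ u in Ioo 0 (s t), ENNReal.ofReal (f u ^ 2) with hF
  have hΦF : Φ ≤ F := by
    have hmm : Measurable fun x => ENNReal.ofReal (f (s (p x)) ^ 2) :=
      ENNReal.measurable_ofReal.comp ((hfs.comp hpm).pow_const 2)
    have : Φ = ∫⁻ x, ENNReal.ofReal (p x)
        ∂(μ.withDensity fun x => ENNReal.ofReal (f (s (p x)) ^ 2)) :=
      (lintegral_withDensity_eq_lintegral_mul _ hmm (ENNReal.measurable_ofReal.comp hpm)).symm
    rw [this, aux_layer _ p M hMpos hpnn hpM hpm]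
    refine setLIntegral_mono' measurableSet_Ioo fun t ht => ?_
    rw [withDensity_apply _ (hUm t)]
    exact aux_D μ p hpc s hs f hfmono hfnn t
  have hFtop : F ≠ ∞ := by
    have : F ≤ ∫⁻ t in Ioo 0 M, 2 * (ENNReal.ofReal (f0 (d / 2) ^ 2) * ENNReal.ofReal (d / 2)) := by
      refine setLIntegral_mono' measurableSet_Ioo fun t ht => ?_
      gcongr
      calc _ ≤ ∫⁻ u in Ioo 0 (s t), ENNReal.ofReal (f0 (d / 2) ^ 2) := by
            refine lintegral_mono fun u => ENNReal.ofReal_le_ofReal ?_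
            exact pow_le_pow_left₀ (hfnn u) (hfbd u) 2
        _ = ENNReal.ofReal (f0 (d / 2) ^ 2) * ENNReal.ofReal (s t) := by
            rw [setLIntegral_const, Real.volume_Ioo, sub_zero]
        _ ≤ _ := by
            gcongr
            exact (hsd t ht.1).2
    refine ne_top_of_le_ne_top ?_ this
    rw [setLIntegral_const, Real.volume_Ioo]
    exact ENNReal.mul_ne_top (ENNReal.mul_ne_top (by simp)
      (ENNReal.mul_ne_top ENNReal.ofReal_ne_top ENNReal.ofReal_ne_top)) ENNReal.ofReal_ne_top
  -- kinetic part
  have hp' : ∀ x, HasDerivAt p (2 * v x * deriv v x) x := by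
    intro x
    have := ((hvC.differentiable one_ne_zero) x).hasDerivAt.pow 2
    have e : 2 * v x * deriv v x = ((2 : ℕ) : ℝ) * v x ^ (2 - 1) * deriv v x := by norm_num
    rw [e]
    exact this
  have hgm : Measurable fun t => ENNReal.ofReal (f (s t)) := ENNReal.measurable_ofReal.comp hfs
  have hp'm : Measurable fun x => 2 * v x * deriv v x :=
    ((continuous_const.mul hvc).mul hv'c).measurable
  have hkin : ∫⁻ t in Ioo 0 M, 2 * ENNReal.ofReal (f (s t)) ≤ N1 + Φ := by
    rw [lintegral_const_mul _ hgm, two_mul]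
    have hL := aux_area p _ hp' hp'm hpm (Ioo (-(π / 2)) x₀) measurableSet_Ioo M (by
      have := intermediate_value_Ioo hx₀V.1.le (hpc.continuousOn (s := Icc (-(π / 2)) x₀))
      rwa [hpl] at this) _ hgm
    have hR := aux_area p _ hp' hp'm hpm (Ioo x₀ (π / 2)) measurableSet_Ioo M (by
      have := intermediate_value_Ioo' hx₀V.2.le (hpc.continuousOn (s := Icc x₀ (π / 2)))
      rwa [hpr] at this) _ hgm
    refine (add_le_add hL hR).trans ?_
    rw [← lintegral_union measurableSet_Ioo]
    · calc _ ≤ ∫⁻ x in V, ENNReal.ofReal |2 * v x * deriv v x| * ENNReal.ofReal (f (s (p x))) := by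
            apply lintegral_mono_set
            rintro x (hx | hx)
            · exact ⟨hx.1, hx.2.trans hx₀V.2⟩
            · exact ⟨hx₀V.1.trans hx.1, hx.2⟩
        _ ≤ ∫⁻ x in V, (ENNReal.ofReal (deriv v x ^ 2) +
              ENNReal.ofReal (f (s (p x)) ^ 2) * ENNReal.ofReal (p x)) := by
            refine lintegral_mono fun x => ?_
            simp only
            rw [← ENNReal.ofReal_mul (abs_nonneg _), ← ENNReal.ofReal_mul (sq_nonneg _),
              ← ENNReal.ofReal_add (sq_nonneg _) (mul_nonneg (sq_nonneg _) (hpnn x))]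
            apply ENNReal.ofReal_le_ofReal
            simp only [hp]
            rw [abs_mul, abs_mul, abs_two]
            have e1 := sq_abs (v x)
            have e2 := sq_abs (deriv v x)
            rw [← e1, ← e2]
            nlinarith [sq_nonneg (|deriv v x| - f (s (|v x| ^ 2)) * |v x|)]
        _ = N1 + Φ := by
            rw [lintegral_add_left]
            exact ENNReal.measurable_ofReal.comp (hv'c.measurable.pow_const 2)
    · rw [Set.disjoint_left]
      intro x hx hx'
      exact absurd hx.2 (not_lt.2 hx'.1.le)
  have hmono1 : Measurable fun t => ∫⁻ u in Ioo 0 (s t), ENNReal.ofReal (f u ^ 2) :=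
    Antitone.measurable fun a b hab => lintegral_mono_set (Ioo_subset_Ioo_right (hsanti hab))
  have hcomb : ENNReal.ofReal lam * D + F ≤
      ∫⁻ t in Ioo 0 M, (2 * ENNReal.ofReal (f (s t)) +
        2 * (2 * ∫⁻ u in Ioo 0 (s t), ENNReal.ofReal (tan u ^ 2))) := by
    have h2s : Measurable fun t => ENNReal.ofReal (2 * s t) :=
      ENNReal.measurable_ofReal.comp (hsanti.measurable.const_mul 2)
    rw [hDlayer, ← lintegral_const_mul _ h2s, hF,
      ← lintegral_add_right _ (hmono1.const_mul 2)]
    refine setLIntegral_mono' measurableSet_Ioo fun t ht => ?_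
    have := mul_le_mul_right (hpoint (s t) (hsd t ht.1)) (2 : ℝ≥0∞)
    rw [mul_add, mul_add] at this
    refine le_trans (le_of_eq ?_) this
    rw [ENNReal.ofReal_mul (by norm_num)]
    simp only [ENNReal.ofReal_ofNat]
    ring
  rw [lintegral_add_left (hgm.const_mul 2)] at hcomb
  have hfin : ENNReal.ofReal lam * D + F ≤ (N1 + N2) + F := by
    calc _ ≤ _ := hcomb
      _ ≤ (N1 + Φ) + N2 := add_le_add hkin hN2low
      _ ≤ (N1 + F) + N2 := by gcongr
      _ = _ := by ring
  exact (ENNReal.add_le_add_iff_right hFtop).1 hfin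

lemma aux_pi (P : PsiA) (hdom : P.dom = Ioo (-(π / 2)) (π / 2)) (δ : ℝ) (hδ : 0 < δ)
    (hδ1 : δ ≤ 1 / 6) :
    ENNReal.ofReal (2 - 6 * δ) ≤ lam1 (-(π / 2)) (π / 2) ((2 : ℝ≥0∞) • P.sqM) := by
  have hpos : ∀ u ∈ Icc 0 (π / 2), 0 < cos u + δ * sin u := by
    intro u hu
    have h1 : 0 ≤ cos u := cos_nonneg_of_mem_Icc ⟨by linarith [hu.1, pi_pos], hu.2⟩
    rcases eq_or_lt_of_le hu.1 with h | h
    · rw [← h]; simp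
    · have : 0 < sin u := sin_pos_of_pos_of_lt_pi h (by linarith [hu.2, pi_pos])
      positivity
  refine aux_core π pi_pos le_rfl P hdom (2 - 6 * δ) (by linarith)
    (fun u => 2 * sin u / (cos u + δ * sin u)) (fun u => 2 / (cos u + δ * sin u) ^ 2)
    ?_ ?_ ?_ ?_ ?_
  · intro u hu
    have h := ((hasDerivAt_sin u).const_mul 2).div
      ((hasDerivAt_cos u).add ((hasDerivAt_sin u).const_mul δ)) (hpos u hu).ne'
    refine h.congr_deriv ?_
    refine congrArg (fun z : ℝ => z / (cos u + δ * sin u) ^ 2) ?_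
    simp only [Pi.add_apply]
    linear_combination (2) * sin_sq_add_cos_sq u
  · apply ContinuousOn.div continuousOn_const
    · fun_prop
    · intro u hu
      exact (pow_pos (hpos u hu) 2).ne'
  · intro u hu
    positivity
  · simp
  · intro u hu
    have hcos : 0 < cos u := cos_pos_of_mem_Ioo ⟨by linarith [hu.1, pi_pos], hu.2⟩
    have ht : 0 < tan u := tan_pos_of_pos_of_lt_pi_div_two hu.1 hu.2
    have hsin : sin u = tan u * cos u := (tan_mul_cos hcos.ne').symm
    have hc2 : 1 = cos u ^ 2 * (1 + tan u ^ 2) := by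
      have := sin_sq_add_cos_sq u
      rw [hsin] at this
      linarith
    generalize tan u = τ at *
    generalize cos u = c at *
    rw [hsin]
    have hD : 0 < 1 + δ * τ := by positivity
    have e1 : 2 * (τ * c) / (c + δ * (τ * c)) = 2 * τ / (1 + δ * τ) := by
      field_simp
    have e2 : 2 / (c + δ * (τ * c)) ^ 2 = 2 * (1 + τ ^ 2) / (1 + δ * τ) ^ 2 := by
      have : c + δ * (τ * c) = c * (1 + δ * τ) := by ring
      rw [this, div_eq_div_iff (by positivity) (by positivity)]
      linear_combination (2 * (1 + δ * τ) ^ 2) * hc2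
    rw [e1, e2, div_pow, ← sub_nonneg]
    have e3 : 2 * (1 + τ ^ 2) / (1 + δ * τ) ^ 2 + 2 * τ ^ 2 -
        (2 - 6 * δ + (2 * τ) ^ 2 / (1 + δ * τ) ^ 2) =
        (δ * (6 - 4 * τ + 4 * τ ^ 3) + δ ^ 2 * (-2 * τ ^ 2 + 12 * τ + 2 * τ ^ 4)
          + 6 * δ ^ 3 * τ ^ 2) / (1 + δ * τ) ^ 2 := by
      field_simp
      ring
    rw [e3]
    have a1 : 0 ≤ 6 - 4 * τ + 4 * τ ^ 3 := by
      nlinarith [mul_nonneg ht.le (sq_nonneg (τ - 1)), sq_nonneg (τ - 1)]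
    have a2 : 0 ≤ -2 * τ ^ 2 + 12 * τ + 2 * τ ^ 4 := by
      nlinarith [mul_nonneg ht.le (sq_nonneg (τ - 1)), sq_nonneg (τ - 1),
        mul_nonneg ht.le (mul_nonneg ht.le (sq_nonneg (τ - 1)))]
    positivity

lemma aux_lt (d : ℝ) (hd0 : 0 < d) (hdpi : d < π) (P : PsiA)
    (hdom : P.dom = Ioo (-(d / 2)) (d / 2)) :
    ENNReal.ofReal (2 + cos (d / 2) ^ 3 / 16) ≤
      lam1 (-(π / 2)) (π / 2) ((2 : ℝ≥0∞) • P.sqM) := by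
  have hc : 0 < cos (d / 2) := cos_pos_of_mem_Ioo ⟨by linarith, by linarith⟩
  have hcosu : ∀ u ∈ Icc 0 (d / 2), 0 < cos u := fun u hu =>
    cos_pos_of_mem_Ioo ⟨by linarith [hu.1], by linarith [hu.2]⟩
  have hcle : ∀ u ∈ Icc 0 (d / 2), cos (d / 2) ≤ cos u := fun u hu =>
    cos_le_cos_of_nonneg_of_le_pi hu.1 (by linarith) hu.2
  have htan0 : ∀ u ∈ Icc 0 (d / 2), 0 ≤ tan u := fun u hu =>
    tan_nonneg_of_nonneg_of_le_pi_div_two hu.1 (by linarith [hu.2])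
  have htanle : ∀ u ∈ Icc 0 (d / 2), tan u ≤ 1 / cos (d / 2) := by
    intro u hu
    rw [tan_eq_sin_div_cos]
    have := hcle u hu
    have := sin_le_one u
    gcongr
  have hc1 : cos (d / 2) ≤ 1 := cos_le_one _
  set c := cos (d / 2) with hcdef
  obtain ⟨K, hK⟩ : ∃ K : ℝ, K = (1 / c) ^ 3 := ⟨_, rfl⟩
  have hKpos : 0 < K := by rw [hK]; positivity
  have h1c : 1 ≤ 1 / c := by rw [le_div_iff₀ hc]; linarith
  have hKc : 1 / c ≤ K := by rw [hK]; exact le_self_pow₀ h1c (by norm_num)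
  obtain ⟨R, hR⟩ : ∃ R : ℝ → ℝ, R = fun u => 4 * K - tan u - tan u ^ 3 / 3 - K * u := ⟨_, rfl⟩
  have hRpos : ∀ u ∈ Icc 0 (d / 2), 0 < R u := by
    intro u hu
    have e1 := (htanle u hu).trans hKc
    have e2 : tan u ^ 3 ≤ K := by rw [hK]; exact pow_le_pow_left₀ (htan0 u hu) (htanle u hu) 3
    have e3 : u ≤ 1.6 := by linarith [hu.2, pi_lt_d2]
    have e4 : K * u ≤ K * 1.6 := by gcongr
    rw [hR]
    simp only
    linarith
  have hRle : ∀ u ∈ Icc 0 (d / 2), R u ≤ 4 * K := by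
    intro u hu
    have e1 := htan0 u hu
    have e2 : 0 ≤ tan u ^ 3 := by positivity
    have e3 : 0 ≤ K * u := mul_nonneg hKpos.le hu.1
    rw [hR]
    simp only
    linarith
  have hdt : ∀ u ∈ Icc 0 (d / 2), HasDerivAt tan (1 + tan u ^ 2) u := by
    intro u hu
    have h := hasDerivAt_tan (hcosu u hu).ne'
    have e : 1 + tan u ^ 2 = 1 / cos u ^ 2 := by
      rw [tan_eq_sin_div_cos]
      have := (hcosu u hu).ne'
      field_simp
      linarith [sin_sq_add_cos_sq u]
    rw [e]; exact h
  have hdR : ∀ u ∈ Icc 0 (d / 2), HasDerivAt R (-((1 + tan u ^ 2) ^ 2 + K)) u := by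
    intro u hu
    rw [hR]
    have h := ((((hdt u hu).const_sub (4 * K))).sub (((hdt u hu).pow 3).div_const 3)).sub
      ((hasDerivAt_id u).const_mul K)
    refine h.congr_deriv ?_
    push_cast
    ring
  have hcR : ContinuousOn R (Icc 0 (d / 2)) := fun u hu =>
    (hdR u hu).continuousAt.continuousWithinAt
  have hct : ContinuousOn tan (Icc 0 (d / 2)) := fun u hu =>
    (hdt u hu).continuousAt.continuousWithinAt
  refine aux_core d hd0 hdpi.le P hdom (2 + c ^ 3 / 16) (by positivity)
    (fun u => 2 * tan u + (1 + tan u ^ 2) ^ 2 / R u)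
    (fun u => 2 * (1 + tan u ^ 2) + 4 * tan u * (1 + tan u ^ 2) ^ 2 / R u +
      (1 + tan u ^ 2) ^ 2 * ((1 + tan u ^ 2) ^ 2 + K) / R u ^ 2) ?_ ?_ ?_ ?_ ?_
  · intro u hu
    have h := ((hdt u hu).const_mul 2).add
      (((((hdt u hu).pow 2).const_add 1).pow 2).div (hdR u hu) (hRpos u hu).ne')
    refine h.congr_deriv ?_
    have := (hRpos u hu).ne'
    simp only [Pi.pow_apply]
    field_simp
    push_cast
    ring
  · have hne : ∀ u ∈ Icc 0 (d / 2), R u ≠ 0 := fun u hu => (hRpos u hu).ne'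
    have hne2 : ∀ u ∈ Icc 0 (d / 2), R u ^ 2 ≠ 0 := fun u hu => pow_ne_zero 2 (hne u hu)
    have hq : ContinuousOn (fun u => 1 + tan u ^ 2) (Icc 0 (d / 2)) :=
      continuousOn_const.add (hct.pow 2)
    exact ((continuousOn_const.mul hq).add
      (((continuousOn_const.mul hct).mul (hq.pow 2)).div hcR hne)).add
      (((hq.pow 2).mul ((hq.pow 2).add continuousOn_const)).div (hcR.pow 2) hne2)
  · intro u hu
    have := htan0 u hu
    have := hRpos u hu
    positivity
  · have := hRpos 0 ⟨le_rfl, by positivity⟩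
    simp only [tan_zero]
    positivity
  · intro u hu'
    have hu := Ioo_subset_Icc_self hu'
    have hr := hRpos u hu
    have hr4 := hRle u hu
    have hc3 : c ^ 3 / 16 = K / (4 * K) ^ 2 := by
      rw [hK]; field_simp; norm_num
    have key : c ^ 3 / 16 ≤ K * (1 + tan u ^ 2) ^ 2 / R u ^ 2 := by
      rw [hc3]
      have : 1 ≤ (1 + tan u ^ 2) ^ 2 := one_le_pow₀ (by nlinarith [sq_nonneg (tan u)])
      gcongr
      nlinarith
    have e : 2 * (1 + tan u ^ 2) + 4 * tan u * (1 + tan u ^ 2) ^ 2 / R u +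
      (1 + tan u ^ 2) ^ 2 * ((1 + tan u ^ 2) ^ 2 + K) / R u ^ 2 + 2 * tan u ^ 2 =
      2 + (2 * tan u + (1 + tan u ^ 2) ^ 2 / R u) ^ 2 + K * (1 + tan u ^ 2) ^ 2 / R u ^ 2 := by
      field_simp
      ring
    rw [e]
    linarith

/-- Proposition 2.9 / `p:quarta`: there exists an absolute constant `C > 0`
such that, for any `ψ ∈ 𝒜(I_π)` with finiteness domain `I_d = (-d/2, d/2)` (`d ≤ π`),
it holds `λ₁(I_d, 2ψ²) ≥ 2 + C (π - d)³`. -/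
theorem refined_lower_bound_two_psi_sq :
    ∃ C : ℝ, 0 < C ∧
      ∀ d : ℝ, 0 < d → d ≤ π →
        ∀ P : PsiA, P.dom = Ioo (-(d / 2)) (d / 2) →
          2 + ENNReal.ofReal (C * (π - d) ^ 3) ≤
            lam1 (-(π / 2)) (π / 2) ((2 : ℝ≥0∞) • P.sqM) := by
  refine ⟨1 / (16 * π ^ 3), by positivity, ?_⟩
  intro d hd0 hdpi P hdom
  have h2 : (2 : ℝ≥0∞) = ENNReal.ofReal 2 := by simp
  rcases eq_or_lt_of_le hdpi with rfl | hlt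
  · rw [sub_self, zero_pow (by norm_num), mul_zero, ENNReal.ofReal_zero, add_zero]
    have hlim : Tendsto (fun δ : ℝ => ENNReal.ofReal (2 - 6 * δ)) (nhdsWithin 0 (Ioi 0))
        (nhds (ENNReal.ofReal (2 - 6 * 0))) := by
      apply tendsto_nhdsWithin_of_tendsto_nhds
      apply Continuous.tendsto
      exact ENNReal.continuous_ofReal.comp (by fun_prop)
    have h3 : (2 : ℝ≥0∞) = ENNReal.ofReal (2 - 6 * 0) := by simp
    refine le_trans h3.le (le_of_tendsto hlim ?_)
    have hmem : Ioc (0 : ℝ) (1 / 6) ∈ nhdsWithin (0 : ℝ) (Ioi 0) :=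
      Ioc_mem_nhdsGT (by norm_num)
    filter_upwards [hmem] with δ hδ
    exact aux_pi P hdom δ hδ.1 hδ.2
  · refine le_trans ?_ (aux_lt d hd0 hlt P hdom)
    have hε : 0 < π - d := by linarith
    rw [show (2 : ℝ≥0∞) + ENNReal.ofReal (1 / (16 * π ^ 3) * (π - d) ^ 3) =
      ENNReal.ofReal (2 + 1 / (16 * π ^ 3) * (π - d) ^ 3) by
        rw [ENNReal.ofReal_add (by norm_num) (by positivity)]; simp]
    apply ENNReal.ofReal_le_ofReal
    have hs : (π - d) / π ≤ cos (d / 2) := by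
      have := mul_le_sin (x := (π - d) / 2) (by linarith) (by linarith)
      rw [show (π - d) / 2 = π / 2 - d / 2 by ring, sin_pi_div_two_sub] at this
      refine le_trans (le_of_eq ?_) this
      field_simp
    have h3 := pow_le_pow_left₀ (by positivity) hs 3
    have e : 1 / (16 * π ^ 3) * (π - d) ^ 3 = ((π - d) / π) ^ 3 / 16 := by
      field_simp
    rw [e]
    linarith
end
end
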